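/- arXiv:2004.13129 — 4 statements merged into one kernel-verified Lean document; each statement's English description precedes it below -/
import Mathlib

section
/- Let n ≥ 1 be an integer, let α ∈ (0,1), s ∈ (0,1), and p ≥ 1 satisfy n > s·p, and let Ω ⊂ ℝ^{n+1} be an open convex set. Set p*_s := np/(n − sp). Then there exists a constant C > 0, depending only on n, α, s, and p, such that for every μH[n]-measurable function u : ℝ^{n+1} → ℝ with ∫_{∂Ω} |u|^p dμH[n] < ∞ one has (∫_{∂Ω} |u(x)|^{p*_s} dx)^{1/p*_s} ≤ C · ( (1/2) ∫_{∂Ω} ∫_{∂Ω} |u(x) − u(y)|^p / |x − y|^{n + sp} dx dy + ∫_{∂Ω} H_α(x)^{sp/α} |u(x)|^p dx )^{1/p}, where all integrals are taken in [0, +∞]. -/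
open MeasureTheory Set Filter Metric
open scoped ENNReal NNReal

/-- The truncated integral defining the fractional `α`-mean curvature of `Ω` at `x`:
`(α/2) ∫_{|y-x|>ε} (χ_{Ωᶜ}(y) - χ_Ω(y)) |y-x|^{-(n+1+α)} dy`. -/
noncomputable def fracMCIntegral (n : ℕ) (α : ℝ) (Ω : Set (EuclideanSpace ℝ (Fin (n+1))))
    (x : EuclideanSpace ℝ (Fin (n+1))) (ε : ℝ) : ℝ :=
  (α/2) * ∫ y in {y : EuclideanSpace ℝ (Fin (n+1)) | ε < dist y x},
      ((Ωᶜ.indicator (fun _ => (1:ℝ)) y) - (Ω.indicator (fun _ => (1:ℝ)) y))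
        * (dist y x) ^ (-((n:ℝ)+1+α)) ∂volume

/-- `h` is the fractional `α`-mean curvature of `Ω` at `x` (principal value limit). -/
def IsFracMeanCurv (n : ℕ) (α : ℝ) (Ω : Set (EuclideanSpace ℝ (Fin (n+1))))
    (x : EuclideanSpace ℝ (Fin (n+1))) (h : ℝ) : Prop :=
  Filter.Tendsto (fracMCIntegral n α Ω x) (nhdsWithin 0 (Set.Ioi 0)) (nhds h)

/-- Pointwise form of the weighted Sobolev inequality: if at every scale either balls around `x`
have large mass or the weight at `x` is large, then `|v x| ^ q` is controlled by the Gagliardo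
energy density plus the weighted term. -/
theorem ofReal_rpow_le_of_ball_or_weight {X : Type*} [MetricSpace X] [MeasurableSpace X]
    [OpensMeasurableSpace X] (μ : Measure X) {d t p q c₀ c : ℝ} (ht : 0 < t) (hd : 0 < d)
    (hq : 0 < q) (hp : 0 < p) (hpq : p + q * (t / d) = q) (hc₀ : 0 < c₀) (hc : 0 < c)
    (v : X → ℝ) (hv : Measurable v) (x : X) (w : ℝ≥0∞)
    (hx : ∀ r : ℝ, 0 < r →
      ENNReal.ofReal (c₀ * r ^ d) ≤ μ (ball x r) ∨ ENNReal.ofReal (c * r ^ (-t)) ≤ w)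
    {A : ℝ} (hA0 : 0 < A) (hA : ∫⁻ y, ENNReal.ofReal (|v y| ^ q) ∂μ = ENNReal.ofReal A) :
    ENNReal.ofReal (min c (c₀ * (1 / 2) ^ (p + 1)) * (2 ^ (q + 1) / c₀) ^ (-(t / d))
        * A ^ (-(t / d)) * |v x| ^ q) ≤
      ∫⁻ y, ENNReal.ofReal (|v x - v y| ^ p / dist x y ^ (d + t)) ∂μ
        + w * ENNReal.ofReal (|v x| ^ p) := by
  rcases (abs_nonneg (v x)).eq_or_lt with h0 | hm
  · rw [← h0, Real.zero_rpow hq.ne']; simp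
  set m := |v x| with hmdef
  obtain ⟨r, hr0, hr⟩ : ∃ r : ℝ, 0 < r ∧ r ^ d = 2 ^ (q + 1) / c₀ * A * m ^ (-q) := by
    refine ⟨(2 ^ (q + 1) / c₀ * A * m ^ (-q)) ^ (1 / d), by positivity, ?_⟩
    rw [← Real.rpow_mul (by positivity), one_div_mul_cancel hd.ne', Real.rpow_one]
  have hrt : r ^ (-t) * m ^ p
      = (2 ^ (q + 1) / c₀) ^ (-(t / d)) * A ^ (-(t / d)) * m ^ q := by
    have h1 : r ^ (-t) = (r ^ d) ^ (-(t / d)) := by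
      rw [← Real.rpow_mul hr0.le]; congr 1; field_simp
    rw [h1, hr, Real.mul_rpow (by positivity) (by positivity),
      Real.mul_rpow (by positivity) (by positivity), ← Real.rpow_mul hm.le, mul_assoc,
      ← Real.rpow_add hm]
    congr 2
    linarith
  rw [mul_assoc, mul_assoc, ← mul_assoc (_ ^ (-(t / d))), ← hrt]
  rcases hx r hr0 with hx | hx
  · refine le_trans ?_ le_self_add
    set T : Set X := ball x r ∩ {y | |v y| < m / 2} with hT
    have hTm : MeasurableSet T :=
      measurableSet_ball.inter (measurableSet_lt hv.abs measurable_const)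
    have hmark : μ {y | m / 2 ≤ |v y|} ≤ ENNReal.ofReal (c₀ * r ^ d / 2) := by
      have h1 : {y | m / 2 ≤ |v y|} ⊆
          {y | ENNReal.ofReal ((m / 2) ^ q) ≤ ENNReal.ofReal (|v y| ^ q)} := fun y hy =>
        ENNReal.ofReal_le_ofReal (Real.rpow_le_rpow (by positivity) hy hq.le)
      refine (measure_mono h1).trans ?_
      have h2 := mul_meas_ge_le_lintegral (μ := μ)
        (f := fun y => ENNReal.ofReal (|v y| ^ q)) (by fun_prop) (ENNReal.ofReal ((m / 2) ^ q))
      rw [hA] at h2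
      have h3 : c₀ * r ^ d / 2 = A / (m / 2) ^ q := by
        rw [hr, Real.div_rpow hm.le (by norm_num), Real.rpow_neg hm.le,
          Real.rpow_add (by norm_num), Real.rpow_one]
        field_simp
      rw [h3, ENNReal.ofReal_div_of_pos (by positivity),
        ENNReal.le_div_iff_mul_le (Or.inl (by simpa using by positivity)) (Or.inl (by simp)),
        mul_comm]
      exact h2
    have hμT : ENNReal.ofReal (c₀ * r ^ d / 2) ≤ μ T := by
      have h1 : ball x r \ {y | m / 2 ≤ |v y|} ⊆ T := fun y hy => ⟨hy.1, by simpa using hy.2⟩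
      refine le_trans ?_ (le_measure_sdiff.trans (measure_mono h1))
      refine le_trans ?_ (tsub_le_tsub hx hmark)
      rw [← ENNReal.ofReal_sub _ (by positivity)]
      apply ENNReal.ofReal_le_ofReal
      linarith
    have hpt : ∀ y ∈ T, ENNReal.ofReal ((m / 2) ^ p / r ^ (d + t)) ≤
        ENNReal.ofReal (|v x - v y| ^ p / dist x y ^ (d + t)) := by
      rintro y ⟨hy1, hy2⟩
      simp only [mem_ofPred_eq] at hy2
      apply ENNReal.ofReal_le_ofReal
      have hxy : 0 < dist x y := by
        rw [dist_pos]
        rintro rfl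
        linarith
      have hyr : dist x y ≤ r := by rw [dist_comm]; exact (mem_ball.1 hy1).le
      have hd2 : m / 2 ≤ |v x - v y| := by
        have := abs_sub_abs_le_abs_sub (v x) (v y)
        linarith
      gcongr
    calc _ ≤ ENNReal.ofReal ((m / 2) ^ p / r ^ (d + t) * (c₀ * r ^ d / 2)) := by
          apply ENNReal.ofReal_le_ofReal
          have : (m / 2) ^ p / r ^ (d + t) * (c₀ * r ^ d / 2)
              = c₀ * (1 / 2) ^ (p + 1) * (r ^ (-t) * m ^ p) := by
            rw [Real.div_rpow hm.le (by norm_num), Real.rpow_add hr0, Real.rpow_neg hr0.le,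
              Real.rpow_add (by norm_num), Real.rpow_one, Real.div_rpow (by norm_num) (by norm_num),
              Real.one_rpow]
            field_simp
          rw [this]
          gcongr
          exact min_le_right _ _
      _ = ENNReal.ofReal ((m / 2) ^ p / r ^ (d + t)) * ENNReal.ofReal (c₀ * r ^ d / 2) :=
          ENNReal.ofReal_mul (by positivity)
      _ ≤ ENNReal.ofReal ((m / 2) ^ p / r ^ (d + t)) * μ T := by gcongr
      _ = ∫⁻ _ in T, ENNReal.ofReal ((m / 2) ^ p / r ^ (d + t)) ∂μ := by simp
      _ ≤ ∫⁻ y in T, ENNReal.ofReal (|v x - v y| ^ p / dist x y ^ (d + t)) ∂μ :=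
          setLIntegral_mono' hTm hpt
      _ ≤ _ := setLIntegral_le_lintegral _ _
  · refine le_trans ?_ le_add_self
    calc _ ≤ ENNReal.ofReal (c * r ^ (-t) * m ^ p) := by
          rw [mul_assoc]
          apply ENNReal.ofReal_le_ofReal
          gcongr
          exact min_le_left _ _
      _ = ENNReal.ofReal (c * r ^ (-t)) * ENNReal.ofReal (m ^ p) :=
          ENNReal.ofReal_mul (by positivity)
      _ ≤ _ := by gcongr

theorem lintegral_rpow_le_of_finite {X : Type*} [MetricSpace X] [MeasurableSpace X]
    [OpensMeasurableSpace X] (μ : Measure X) {d t p q c₀ c : ℝ} (ht : 0 < t) (htd : t < d)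
    (hq : 0 < q) (hp : 0 < p) (hpq : p + q * (t / d) = q) (hc₀ : 0 < c₀) (hc : 0 < c)
    (v : X → ℝ) (hv : Measurable v) (w : X → ℝ≥0∞) (hw : Measurable w)
    (hx : ∀ᵐ x ∂μ, ∀ r : ℝ, 0 < r →
      ENNReal.ofReal (c₀ * r ^ d) ≤ μ (ball x r) ∨ ENNReal.ofReal (c * r ^ (-t)) ≤ w x)
    (hA : ∫⁻ y, ENNReal.ofReal (|v y| ^ q) ∂μ ≠ ⊤) :
    (∫⁻ y, ENNReal.ofReal (|v y| ^ q) ∂μ) ^ (1 - t / d) ≤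
      ENNReal.ofReal (min c (c₀ * (1 / 2) ^ (p + 1)) * (2 ^ (q + 1) / c₀) ^ (-(t / d)))⁻¹ *
      (∫⁻ x, ∫⁻ y, ENNReal.ofReal (|v x - v y| ^ p / dist x y ^ (d + t)) ∂μ ∂μ
        + ∫⁻ x, w x * ENNReal.ofReal (|v x| ^ p) ∂μ) := by
  have hd : 0 < d := ht.trans htd
  have htd' : t / d < 1 := (div_lt_one hd).2 htd
  set A' := ∫⁻ y, ENNReal.ofReal (|v y| ^ q) ∂μ with hA'
  rcases eq_or_ne A' 0 with h0 | h0
  · rw [h0, ENNReal.zero_rpow_of_pos (by linarith)]; exact zero_le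
  set A := A'.toReal with hAd
  have hApos : 0 < A := ENNReal.toReal_pos h0 hA
  have hAeq : A' = ENNReal.ofReal A := (ENNReal.ofReal_toReal hA).symm
  set k := min c (c₀ * (1 / 2) ^ (p + 1)) * (2 ^ (q + 1) / c₀) ^ (-(t / d)) with hk
  have hkpos : 0 < k := by positivity
  rw [← lintegral_add_right _ (by fun_prop), ENNReal.ofReal_inv_of_pos hkpos, mul_comm,
    ← div_eq_mul_inv,
    ENNReal.le_div_iff_mul_le (Or.inl (by simpa using hkpos)) (Or.inl (by simp))]
  calc A' ^ (1 - t / d) * ENNReal.ofReal k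
      = ENNReal.ofReal (k * A ^ (-(t / d))) * A' := by
        rw [hAeq, ENNReal.ofReal_rpow_of_pos hApos, ← ENNReal.ofReal_mul (by positivity),
          ← ENNReal.ofReal_mul (by positivity), sub_eq_add_neg, Real.rpow_add hApos, Real.rpow_one]
        congr 1; ring
    _ = ∫⁻ x, ENNReal.ofReal (k * A ^ (-(t / d)) * |v x| ^ q) ∂μ := by
        rw [hA', ← lintegral_const_mul' _ _ (by simp)]
        refine lintegral_congr fun x => ?_
        rw [← ENNReal.ofReal_mul (by positivity)]
    _ ≤ _ := by
        refine lintegral_mono_ae (hx.mono fun x hx => ?_)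
        exact ofReal_rpow_le_of_ball_or_weight μ ht hd hq hp hpq hc₀ hc v hv x (w x) hx hApos hAeq

/-- Fractional Sobolev inequality with weight, on a metric measure space where at every point and
scale either balls have mass at least `c₀ r ^ d` or the weight is at least `c r ^ (-t)`. -/
theorem lintegral_rpow_le_of_ball_or_weight {X : Type*} [MetricSpace X] [MeasurableSpace X]
    [OpensMeasurableSpace X] (μ : Measure X) {d t p q c₀ c : ℝ} (ht : 0 < t) (htd : t < d)
    (hq : 0 < q) (hp : 0 < p) (hpq : p + q * (t / d) = q) (hc₀ : 0 < c₀) (hc : 0 < c)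
    (u : X → ℝ) (hu : Measurable u) (w : X → ℝ≥0∞) (hw : Measurable w)
    (hx : ∀ᵐ x ∂μ, ∀ r : ℝ, 0 < r →
      ENNReal.ofReal (c₀ * r ^ d) ≤ μ (ball x r) ∨ ENNReal.ofReal (c * r ^ (-t)) ≤ w x)
    (hup : ∫⁻ y, ENNReal.ofReal (|u y| ^ p) ∂μ < ⊤) :
    (∫⁻ y, ENNReal.ofReal (|u y| ^ q) ∂μ) ^ (1 - t / d) ≤
      ENNReal.ofReal (min c (c₀ * (1 / 2) ^ (p + 1)) * (2 ^ (q + 1) / c₀) ^ (-(t / d)))⁻¹ *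
      (∫⁻ x, ∫⁻ y, ENNReal.ofReal (|u x - u y| ^ p / dist x y ^ (d + t)) ∂μ ∂μ
        + ∫⁻ x, w x * ENNReal.ofReal (|u x| ^ p) ∂μ) := by
  have hd : 0 < d := ht.trans htd
  have htd' : 0 < 1 - t / d := sub_pos.2 ((div_lt_one hd).2 htd)
  have hpq' : p ≤ q := by
    have : 0 < q * (t / d) := by positivity
    linarith
  rw [← ENNReal.le_rpow_inv_iff htd']
  set v : ℕ → X → ℝ := fun M x => min |u x| M with hvdef
  have hv0 : ∀ M x, 0 ≤ v M x := fun M x => le_min (abs_nonneg _) (Nat.cast_nonneg _)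
  have hvabs : ∀ M x, |v M x| = v M x := fun M x => abs_of_nonneg (hv0 M x)
  have hvu : ∀ M x, v M x ≤ |u x| := fun M x => min_le_left _ _
  have hvm : ∀ M, Measurable (v M) := fun M => hu.abs.min measurable_const
  have hsup : ∫⁻ y, ENNReal.ofReal (|u y| ^ q) ∂μ
      = ⨆ M, ∫⁻ y, ENNReal.ofReal (|v M y| ^ q) ∂μ := by
    have hmono : Monotone fun M y => ENNReal.ofReal (|v M y| ^ q) := by
      intro M N hMN y
      simp only [hvabs]
      apply ENNReal.ofReal_le_ofReal
      refine Real.rpow_le_rpow (hv0 M y) (min_le_min_left _ (by exact_mod_cast hMN)) hq.le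
    rw [← lintegral_iSup (fun M => by have := hvm M; fun_prop) hmono]
    refine lintegral_congr fun y => le_antisymm ?_ (iSup_le fun M => ?_)
    · obtain ⟨M, hM⟩ := exists_nat_ge |u y|
      refine le_iSup_of_le M ?_
      rw [hvabs, hvdef]
      simp only [min_eq_left hM, le_refl]
    · rw [hvabs]
      exact ENNReal.ofReal_le_ofReal (Real.rpow_le_rpow (hv0 M y) (hvu M y) hq.le)
  rw [hsup]
  refine iSup_le fun M => ?_
  rw [ENNReal.le_rpow_inv_iff htd']
  refine (lintegral_rpow_le_of_finite μ ht htd hq hp hpq hc₀ hc (v M) (hvm M) w hw hx ?_).trans ?_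
  · refine ne_top_of_le_ne_top (ENNReal.mul_ne_top (ENNReal.ofReal_ne_top (r := (M : ℝ) ^ (q - p)))
      hup.ne) ?_
    rw [← lintegral_const_mul' _ _ (by simp)]
    refine lintegral_mono fun y => ?_
    rw [← ENNReal.ofReal_mul (by positivity)]
    apply ENNReal.ofReal_le_ofReal
    have h1 : |v M y| ^ q = v M y ^ (q - p) * v M y ^ p := by
      rw [hvabs, ← Real.rpow_add_of_nonneg (hv0 M y) (by linarith) hp.le, sub_add_cancel]
    rw [h1]
    have h2 := hv0 M y
    have h3 : v M y ≤ M := min_le_right _ _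
    have h4 := hvu M y
    have h5 : 0 ≤ q - p := by linarith
    gcongr
  · have hdiff : ∀ x y, |v M x - v M y| ≤ |u x - u y| := fun x y =>
      (abs_min_sub_min_le_max _ _ _ _).trans (by
        simpa using abs_abs_sub_abs_le_abs_sub (u x) (u y))
    refine mul_le_mul' le_rfl (add_le_add (lintegral_mono fun x => lintegral_mono fun y => ?_)
      (lintegral_mono fun x => ?_))
    · have := hdiff x y
      gcongr
    · have := (hvabs M x).trans_le (hvu M x)
      gcongr


theorem exists_mem_segment_frontier {E : Type*} [AddCommGroup E] [Module ℝ E]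
    [TopologicalSpace E] [ContinuousAdd E] [ContinuousSMul ℝ E] {Ω : Set E} (hΩ : IsOpen Ω)
    {y z : E} (hy : y ∈ Ω) (hz : z ∉ Ω) : ∃ w ∈ segment ℝ y z, w ∈ frontier Ω := by
  by_contra! h
  have hcl : ∀ w ∈ segment ℝ y z, w ∉ Ω → w ∈ (closure Ω)ᶜ := fun w hw hwΩ hwc =>
    h w hw (by rw [hΩ.frontier_eq]; exact ⟨hwc, hwΩ⟩)
  obtain ⟨w, -, hw, hw'⟩ := (convex_segment y z).isPreconnected Ω (closure Ω)ᶜ hΩ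
    isClosed_closure.isOpen_compl
    (fun w hw => (em (w ∈ Ω)).imp id (hcl w hw)) ⟨y, left_mem_segment ℝ y z, hy⟩
    ⟨z, right_mem_segment ℝ y z, hcl z (right_mem_segment ℝ y z) hz⟩
  exact hw' (subset_closure hw)

theorem exists_unit_inner_lt {E : Type*} [NormedAddCommGroup E] [InnerProductSpace ℝ E]
    [CompleteSpace E] {Ω : Set E} (hΩ : IsOpen Ω) (hconv : Convex ℝ Ω) (hne : Ω.Nonempty)
    {x : E} (hx : x ∉ Ω) : ∃ e : E, ‖e‖ = 1 ∧ ∀ y ∈ Ω, inner ℝ e y < inner ℝ e x := by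
  obtain ⟨f, hf⟩ := geometric_hahn_banach_open_point hconv hΩ hx
  set ν := (InnerProductSpace.toDual ℝ E).symm f with hν
  have hfν : ∀ y, f y = inner ℝ ν y := fun y => by simp [hν]
  have hν0 : ν ≠ 0 := by
    rintro h0
    obtain ⟨y, hy⟩ := hne
    simpa [hfν, h0] using hf y hy
  refine ⟨(‖ν‖⁻¹ : ℝ) • ν, norm_smul_inv_norm hν0, fun y hy => ?_⟩
  have := hf y hy
  rw [hfν, hfν] at this
  rw [real_inner_smul_left, real_inner_smul_left]
  have := norm_pos_iff.2 hν0
  gcongr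

/-- Projecting along the normal of a supporting hyperplane at `x` bounds the volume of a convex set
near `x` by the measure of its boundary near `x`. -/
theorem volume_inter_ball_le_hausdorffMeasure_frontier {n : ℕ}
    {Ω : Set (EuclideanSpace ℝ (Fin (n + 1)))} (hΩ : IsOpen Ω) (hconv : Convex ℝ Ω)
    {x : EuclideanSpace ℝ (Fin (n + 1))} (hx : x ∉ Ω) (r : ℝ) :
    volume (Ω ∩ ball x r) ≤ ENNReal.ofReal (2 * r) * μH[(n : ℝ)] (frontier Ω ∩ ball x r) := by
  rcases Ω.eq_empty_or_nonempty with rfl | hne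
  · simp
  obtain ⟨e, he, heΩ⟩ := exists_unit_inner_lt hΩ hconv hne hx
  obtain ⟨b, hb⟩ := Orthonormal.exists_orthonormalBasis_extension_of_card_eq (𝕜 := ℝ)
    (E := EuclideanSpace ℝ (Fin (n + 1))) (ι := Fin (n + 1)) (by simp)
    (v := fun _ => e) (s := {0}) (by
      rw [orthonormal_iff_ite]
      rintro ⟨i, rfl⟩ ⟨j, rfl⟩
      simp [he])
  replace hb : b 0 = e := hb 0 rfl
  set T : EuclideanSpace ℝ (Fin (n + 1)) → ℝ × (Fin n → ℝ) := fun y =>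
    MeasurableEquiv.piFinSuccAbove (fun _ => ℝ) 0 (WithLp.ofLp (b.repr y)) with hT
  have hTm : MeasurePreserving T :=
    (volume_preserving_piFinSuccAbove (fun _ : Fin (n + 1) => ℝ) 0).comp
      ((PiLp.volume_preserving_ofLp (Fin (n + 1))).comp b.measurePreserving_repr)
  have hTe : ∀ S : Set (ℝ × (Fin n → ℝ)), volume (T ⁻¹' S) = volume S := fun S =>
    hTm.measure_preimage_equiv (f := (b.measurableEquiv.trans
      (MeasurableEquiv.toLp 2 (Fin (n + 1) → ℝ)).symm).trans
        (MeasurableEquiv.piFinSuccAbove (fun _ => ℝ) 0)) S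
  have hT1 : ∀ y, (T y).1 = inner ℝ e y := fun y => by
    simp [hT, MeasurableEquiv.piFinSuccAbove, b.repr_apply_apply, hb]
  have hT2 : ∀ y i, (T y).2 i = inner ℝ (b i.succ) y := fun y i => by
    simp [hT, MeasurableEquiv.piFinSuccAbove, b.repr_apply_apply, Fin.tail]
  have hlip : LipschitzWith 1 fun y => (T y).2 := by
    refine LipschitzWith.of_dist_le_mul fun y z => ?_
    rw [NNReal.coe_one, one_mul, dist_pi_le_iff dist_nonneg]
    intro i
    rw [hT2, hT2, Real.dist_eq, ← inner_sub_right, dist_eq_norm]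
    simpa using abs_real_inner_le_norm (b i.succ) (y - z)
  set P := (fun y => (T y).2) '' (frontier Ω ∩ ball x r) with hP
  have hPle : volume P ≤ μH[(n : ℝ)] (frontier Ω ∩ ball x r) := by
    have h := hlip.hausdorffMeasure_image_le (d := n) (by positivity) (frontier Ω ∩ ball x r)
    rw [← hausdorffMeasure_pi_real, Fintype.card_fin]
    simpa using h
  have hsub : Ω ∩ ball x r ⊆
      T ⁻¹' (Ioo (inner ℝ e x - r) (inner ℝ e x + r) ×ˢ P) := by
    rintro y ⟨hyΩ, hyr⟩
    refine ⟨?_, ?_⟩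
    · rw [hT1]
      have h1 : |inner ℝ e (y - x)| < r := by
        refine (abs_real_inner_le_norm e (y - x)).trans_lt ?_
        rwa [he, one_mul, ← dist_eq_norm]
      rw [inner_sub_right, abs_lt] at h1
      constructor <;> linarith
    · set a := inner ℝ e (x - y) with ha
      have hee : inner ℝ e e = (1 : ℝ) := by rw [real_inner_self_eq_norm_sq, he]; norm_num
      have hz : y + a • e ∉ Ω := fun h => by
        have := heΩ _ h
        rw [inner_add_right, real_inner_smul_right, hee, ha, inner_sub_right] at this
        linarith
      obtain ⟨w, hw, hwf⟩ := exists_mem_segment_frontier hΩ hyΩ hz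
      have hzr : y + a • e ∈ ball x r := by
        refine mem_ball.2 (lt_of_le_of_lt ?_ (mem_ball.1 hyr))
        rw [dist_eq_norm, dist_eq_norm]
        refine le_of_sq_le_sq ?_ (norm_nonneg _)
        have h1 : y + a • e - x = (y - x) + a • e := by abel
        have h2 : inner ℝ (y - x) e = -a := by
          rw [ha, real_inner_comm, ← inner_neg_right, neg_sub]
        rw [h1, norm_add_sq_real, real_inner_smul_right, h2, norm_smul, he, mul_one,
          Real.norm_eq_abs, sq_abs]
        nlinarith [sq_nonneg a]
      refine ⟨w, ⟨hwf, (convex_ball x r).segment_subset hyr hzr hw⟩, ?_⟩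
      obtain ⟨θ, -, rfl⟩ := (segment_eq_image' ℝ y (y + a • e)).subset hw
      funext i
      have h0 : inner ℝ (b i.succ) e = (0 : ℝ) := by
        rw [← hb]; exact b.orthonormal.2 (Fin.succ_ne_zero i)
      simp only [hT2]
      simp [inner_add_right, real_inner_smul_right, h0]
  calc volume (Ω ∩ ball x r) ≤ _ := measure_mono hsub
    _ = ENNReal.ofReal (2 * r) * volume P := by
        rw [hTe, Measure.volume_eq_prod, Measure.prod_prod, Real.volume_Ioo]
        congr 2; ring
    _ ≤ _ := by gcongr

theorem integrableOn_dist_rpow {E : Type*} [NormedAddCommGroup E] [NormedSpace ℝ E]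
    [FiniteDimensional ℝ E] [MeasurableSpace E] [BorelSpace E] (μ : Measure E)
    [μ.IsAddHaarMeasure] (x : E) {ε k : ℝ} (hε : 0 < ε) (hk : (Module.finrank ℝ E : ℝ) < k) :
    IntegrableOn (fun y => dist y x ^ (-k)) {y | ε < dist y x} μ := by
  have hk0 : 0 ≤ k := (Nat.cast_nonneg _).trans hk.le
  have h1 : Integrable (fun y => (ε / (1 + ε)) ^ (-k) * (1 + ‖y - x‖) ^ (-k)) μ :=
    ((integrable_one_add_norm hk).comp_sub_right x).const_mul _
  refine h1.integrableOn.mono' (Measurable.aestronglyMeasurable (by fun_prop)) ?_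
  refine (ae_restrict_iff' (measurableSet_lt measurable_const (by fun_prop))).2
    (ae_of_all _ fun y hy => ?_)
  rw [mem_ofPred_eq] at hy
  have hd : 0 < dist y x := hε.trans hy
  rw [Real.norm_of_nonneg (by positivity), ← Real.mul_rpow (by positivity) (by positivity),
    ← dist_eq_norm]
  refine Real.rpow_le_rpow_of_nonpos (by positivity) ?_ (by linarith)
  rw [div_mul_eq_mul_div, div_le_iff₀ (by positivity)]
  nlinarith

theorem two_mul_indicator_le_compl_indicator_sub_indicator {E : Type*} [AddCommGroup E] [Module ℝ E]
    {Ω : Set E} (hconv : Convex ℝ Ω) {x : E} (hx : x ∉ Ω) (y : E) :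
    2 * ({y | y ∉ Ω ∧ x + x - y ∉ Ω} : Set E).indicator (fun _ => (1 : ℝ)) y ≤
      (Ωᶜ.indicator (fun _ => (1 : ℝ)) y - Ω.indicator (fun _ => (1 : ℝ)) y)
      + (Ωᶜ.indicator (fun _ => (1 : ℝ)) (x + x - y)
        - Ω.indicator (fun _ => (1 : ℝ)) (x + x - y)) := by
  by_cases h1 : y ∈ Ω <;> by_cases h2 : x + x - y ∈ Ω
  · refine absurd ?_ hx
    have := hconv h1 h2 (a := 1 / 2) (b := 1 / 2) (by norm_num) (by norm_num) (by norm_num)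
    convert this using 1
    module
  all_goals simp [indicator, h1, h2]
  norm_num

theorem mul_volume_le_fracMCIntegral {n : ℕ} {α : ℝ} (hα : 0 < α)
    {Ω : Set (EuclideanSpace ℝ (Fin (n + 1)))} (hΩ : IsOpen Ω) (hconv : Convex ℝ Ω)
    {x : EuclideanSpace ℝ (Fin (n + 1))} (hx : x ∉ Ω) {ε r : ℝ} (hε : 0 < ε) :
    α / 2 * (r ^ (-((n : ℝ) + 1 + α)) *
      volume.real ((ball x r ∩ {y | y ∉ Ω ∧ x + x - y ∉ Ω}) \ closedBall x ε)) ≤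
      fracMCIntegral n α Ω x ε := by
  rw [fracMCIntegral]
  refine mul_le_mul_of_nonneg_left ?_ (by positivity)
  set k : ℝ := (n : ℝ) + 1 + α with hk
  set f : EuclideanSpace ℝ (Fin (n + 1)) → ℝ := fun y =>
    Ωᶜ.indicator (fun _ => (1 : ℝ)) y - Ω.indicator (fun _ => (1 : ℝ)) y with hf
  set D : Set (EuclideanSpace ℝ (Fin (n + 1))) := {y | ε < dist y x} with hD
  set B : Set (EuclideanSpace ℝ (Fin (n + 1))) := {y | y ∉ Ω ∧ x + x - y ∉ Ω} with hB
  have hDm : MeasurableSet D := measurableSet_lt measurable_const (by fun_prop)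
  have hBm : MeasurableSet B :=
    hΩ.measurableSet.compl.inter ((hΩ.measurableSet.preimage (by fun_prop)).compl)
  set A := (ball x r ∩ B) \ closedBall x ε with hA
  have hAm : MeasurableSet A := (measurableSet_ball.inter hBm).diff measurableSet_closedBall
  have hfm : Measurable f := (measurable_const.indicator hΩ.measurableSet.compl).sub
    (measurable_const.indicator hΩ.measurableSet)
  have hf1 : ∀ y, ‖f y‖ ≤ 1 := fun y => by
    by_cases h : y ∈ Ω <;> simp [hf, h]
  have hint : Integrable (D.indicator fun y => f y * dist y x ^ (-k)) := by
    rw [integrable_indicator_iff hDm]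
    exact (integrableOn_dist_rpow volume x hε (by simp [hk, hα])).bdd_mul
      hfm.aestronglyMeasurable (ae_of_all _ hf1)
  have hrefl := integral_sub_left_eq_self (D.indicator fun y => f y * dist y x ^ (-k)) volume
    (x + x)
  have hint' := hint.comp_sub_left (x + x)
  rw [← integral_indicator hDm]
  have hAint : Integrable (A.indicator fun _ => r ^ (-k)) :=
    (integrable_indicator_iff hAm).2 (integrableOn_const (by
      exact ((measure_mono (sdiff_subset.trans inter_subset_left)).trans_lt
        measure_ball_lt_top).ne))
  have hmain : 2 * ∫ y, A.indicator (fun _ => r ^ (-k)) y ≤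
      (∫ y, D.indicator (fun y => f y * dist y x ^ (-k)) y)
        + ∫ y, D.indicator (fun y => f y * dist y x ^ (-k)) (x + x - y) := by
    rw [← integral_add hint hint', ← integral_const_mul]
    refine integral_mono (hAint.const_mul 2) (hint.add hint') fun y => ?_
    have hdist : dist (x + x - y) x = dist y x := by
      rw [dist_eq_norm, dist_eq_norm, ← norm_neg]
      congr 1; abel
    have hkey := two_mul_indicator_le_compl_indicator_sub_indicator hconv hx y
    change _ ≤ f y + f (x + x - y) at hkey
    by_cases hyD : y ∈ D
    · have hyD' : x + x - y ∈ D := by rw [hD, mem_ofPred_eq, hdist]; exact hyD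
      have hd : 0 < dist y x := hε.trans hyD
      simp only [indicator_of_mem hyD, indicator_of_mem hyD', hdist]
      rw [← add_mul]
      refine le_trans ?_ (mul_le_mul_of_nonneg_right hkey (by positivity))
      by_cases hyA : y ∈ A
      · rw [indicator_of_mem hyA, indicator_of_mem hyA.1.2, mul_one]
        gcongr 2 * ?_
        exact Real.rpow_le_rpow_of_nonpos hd (mem_ball.1 hyA.1.1).le (by
          rw [hk]; linarith [n.cast_nonneg (α := ℝ)])
      · rw [indicator_of_notMem hyA, mul_zero]
        have : 0 ≤ B.indicator (fun _ => (1 : ℝ)) y := indicator_nonneg (by simp) _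
        positivity
    · have hyD' : x + x - y ∉ D := by rw [hD, mem_ofPred_eq, hdist]; exact hyD
      have hyA : y ∉ A := fun h => hyD (by simpa [hD] using h.2)
      simp [indicator_of_notMem hyD, indicator_of_notMem hyD', indicator_of_notMem hyA]
  rw [hrefl, integral_indicator_const _ hAm, smul_eq_mul] at hmain
  linarith

theorem volume_real_ball_le {n : ℕ} (Ω : Set (EuclideanSpace ℝ (Fin (n + 1)))) (hΩ : IsOpen Ω)
    (x : EuclideanSpace ℝ (Fin (n + 1))) (r ε : ℝ) :
    volume.real (ball x r) ≤
      volume.real ((ball x r ∩ {y | y ∉ Ω ∧ x + x - y ∉ Ω}) \ closedBall x ε)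
        + 2 * volume.real (Ω ∩ ball x r) + volume.real (closedBall x ε) := by
  set B : Set (EuclideanSpace ℝ (Fin (n + 1))) := {y | y ∉ Ω ∧ x + x - y ∉ Ω} with hB
  set S := Ω ∩ ball x r with hS
  set S' := (fun y => x + x - y) ⁻¹' S with hS'
  have hSm : MeasurableSet S := hΩ.measurableSet.inter measurableSet_ball
  have hfin : ∀ T ⊆ ball x r, volume T ≠ ⊤ := fun T hT =>
    ((measure_mono hT).trans_lt measure_ball_lt_top).ne
  have hS'v : volume.real S' = volume.real S :=
    congrArg ENNReal.toReal
      ((Measure.measurePreserving_sub_left volume (x + x)).measure_preimage hSm.nullMeasurableSet)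
  have hrefl : ∀ y, dist (x + x - y) x = dist y x := fun y => by
    rw [dist_eq_norm, dist_eq_norm, ← norm_neg]
    congr 1; abel
  have hsub : ball x r ⊆ ((ball x r ∩ B) \ closedBall x ε ∪ (S ∪ S')) ∪ closedBall x ε := by
    intro y hy
    by_cases hc : y ∈ closedBall x ε
    · exact Or.inr hc
    refine Or.inl ?_
    by_cases h1 : y ∈ Ω
    · exact Or.inr (Or.inl ⟨h1, hy⟩)
    by_cases h2 : x + x - y ∈ Ω
    · exact Or.inr (Or.inr ⟨h2, by rw [mem_ball, hrefl]; exact hy⟩)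
    · exact Or.inl ⟨⟨hy, h1, h2⟩, hc⟩
  have hS's : S' ⊆ ball x r := fun y hy => by
    have := hy.2
    rwa [mem_ball, hrefl] at this
  have hSs : S ⊆ ball x r := inter_subset_right
  have hAs : (ball x r ∩ B) \ closedBall x ε ⊆ ball x r := sdiff_subset.trans inter_subset_left
  calc volume.real (ball x r)
      ≤ volume.real (((ball x r ∩ B) \ closedBall x ε ∪ (S ∪ S')) ∪ closedBall x ε) :=
        measureReal_mono hsub (measure_union_ne_top
          (hfin _ (union_subset hAs (union_subset hSs hS's))) measure_closedBall_lt_top.ne)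
    _ ≤ _ := by
        have h1 := measureReal_union_le (μ := volume)
          ((ball x r ∩ B) \ closedBall x ε ∪ (S ∪ S')) (closedBall x ε)
        have h2 := measureReal_union_le (μ := volume) ((ball x r ∩ B) \ closedBall x ε) (S ∪ S')
        have h3 := measureReal_union_le (μ := volume) S S'
        linarith

/-- At every boundary point and scale of a convex set, either the boundary has large area or the
fractional mean curvature is large. -/
theorem hausdorffMeasure_frontier_or_fracMeanCurv {n : ℕ} {α : ℝ} (hα : 0 < α)
    {Ω : Set (EuclideanSpace ℝ (Fin (n + 1)))} (hΩ : IsOpen Ω) (hconv : Convex ℝ Ω)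
    {x : EuclideanSpace ℝ (Fin (n + 1))} (hx : x ∉ Ω) {h : ℝ} (hh : IsFracMeanCurv n α Ω x h)
    {r V : ℝ} (hr : 0 < r) (hV : V = volume.real (ball (0 : EuclideanSpace ℝ (Fin (n + 1))) 1)) :
    ENNReal.ofReal (V / 8 * r ^ (n : ℝ)) ≤ μH[(n : ℝ)] (frontier Ω ∩ ball x r) ∨
      α / 2 * (V / 4) * r ^ (-α) ≤ h := by
  have hball : volume.real (ball x r) = r ^ (n + 1) * V := by
    rw [← Measure.addHaar_real_closedBall_eq_addHaar_real_ball,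
      Measure.addHaar_real_closedBall _ _ hr.le, hV]
    simp
  have hV0 : 0 ≤ V := hV ▸ measureReal_nonneg
  by_cases hvol : V / 4 * r ^ (n + 1) ≤ volume.real (Ω ∩ ball x r)
  · left
    have h1 := volume_inter_ball_le_hausdorffMeasure_frontier hΩ hconv hx r
    have h2 : ENNReal.ofReal (V / 4 * r ^ (n + 1)) ≤ volume (Ω ∩ ball x r) :=
      ENNReal.ofReal_le_of_le_toReal hvol
    have h3 : ENNReal.ofReal (V / 4 * r ^ (n + 1))
        = ENNReal.ofReal (2 * r) * ENNReal.ofReal (V / 8 * r ^ (n : ℝ)) := by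
      rw [← ENNReal.ofReal_mul (by positivity), Real.rpow_natCast]
      congr 1; ring
    have h4 := h2.trans h1
    rw [h3] at h4
    exact (ENNReal.mul_le_mul_iff_right (by simpa using hr) ENNReal.ofReal_ne_top).1 h4
  · right
    push Not at hvol
    refine ge_of_tendsto hh ?_
    filter_upwards [Ioc_mem_nhdsGT (show (0 : ℝ) < r / 4 by positivity)] with ε hε
    refine le_trans ?_ (mul_volume_le_fracMCIntegral hα hΩ hconv hx hε.1 (r := r))
    have h1 := volume_real_ball_le Ω hΩ x r ε
    have h2 : volume.real (closedBall x ε) ≤ V / 4 * r ^ (n + 1) := by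
      rw [Measure.addHaar_real_closedBall _ _ hε.1.le, ← hV]
      have h3 : ε ^ (n + 1) ≤ (r / 4) ^ (n + 1) := pow_le_pow_left₀ hε.1.le hε.2 _
      have h4 : (r / 4) ^ (n + 1) ≤ r ^ (n + 1) / 4 := by
        rw [div_pow]
        gcongr
        exact le_self_pow₀ (by norm_num) (by simp)
      simp only [finrank_euclideanSpace, Fintype.card_fin]
      nlinarith
    rw [hball] at h1
    have h5 : V / 4 * r ^ (n + 1) ≤
        volume.real ((ball x r ∩ {y | y ∉ Ω ∧ x + x - y ∉ Ω}) \ closedBall x ε) := by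
      linarith
    have h6 : V / 4 * r ^ (-α) = r ^ (-((n : ℝ) + 1 + α)) * (V / 4 * r ^ (n + 1)) := by
      rw [← Real.rpow_natCast r (n + 1), mul_left_comm, ← Real.rpow_add hr]
      congr 2
      push_cast; ring
    rw [mul_assoc, h6]
    gcongr

/-- Fractional Michael-Simon and Allard inequality on convex hypersurfaces:
the Sobolev inequality for `W^{s,p}(∂Ω)`, with the extra `L^p` term weighted by
`H_α^{sp/α}`. -/
theorem fractional_michael_simon_convex
    (n : ℕ) (hn : 1 ≤ n) (α s p : ℝ)
    (hα : α ∈ Set.Ioo (0:ℝ) 1) (hs : s ∈ Set.Ioo (0:ℝ) 1) (hp : 1 ≤ p)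
    (hnsp : (n:ℝ) > s * p) :
    ∃ C : ℝ, 0 < C ∧
      ∀ (Ω : Set (EuclideanSpace ℝ (Fin (n+1)))), IsOpen Ω → Convex ℝ Ω →
      ∀ (Hα : EuclideanSpace ℝ (Fin (n+1)) → ℝ), Measurable Hα →
        (∀ x ∈ frontier Ω, 0 ≤ Hα x) →
        (∀ᵐ x ∂(μH[(n:ℝ)].restrict (frontier Ω)), IsFracMeanCurv n α Ω x (Hα x)) →
      ∀ (u : EuclideanSpace ℝ (Fin (n+1)) → ℝ), Measurable u →
        (∫⁻ x in frontier Ω, ENNReal.ofReal (|u x| ^ p) ∂μH[(n:ℝ)]) < ⊤ →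
        (∫⁻ x in frontier Ω,
            ENNReal.ofReal (|u x| ^ ((n:ℝ) * p / ((n:ℝ) - s * p))) ∂μH[(n:ℝ)])
              ^ (((n:ℝ) - s * p) / ((n:ℝ) * p))
          ≤ ENNReal.ofReal C *
            ((1/2) * ∫⁻ x in frontier Ω, ∫⁻ y in frontier Ω,
                ENNReal.ofReal (|u x - u y| ^ p / dist x y ^ ((n:ℝ) + s * p))
                  ∂μH[(n:ℝ)] ∂μH[(n:ℝ)]
              + ∫⁻ x in frontier Ω,
                  ENNReal.ofReal (Hα x ^ (s * p / α) * |u x| ^ p) ∂μH[(n:ℝ)]) ^ (1/p) := by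
  obtain ⟨hα0, -⟩ := hα
  obtain ⟨hs0, -⟩ := hs
  set V := volume.real (ball (0 : EuclideanSpace ℝ (Fin (n + 1))) 1) with hV
  have hV0 : 0 < V := by
    rw [hV, measureReal_def]
    exact ENNReal.toReal_pos (measure_ball_pos _ _ one_pos).ne' measure_ball_lt_top.ne
  have hp0 : 0 < p := one_pos.trans_le hp
  have ht : 0 < s * p := by positivity
  have hn0 : (0 : ℝ) < n := ht.trans hnsp
  have hnt : 0 < (n : ℝ) - s * p := sub_pos.2 hnsp
  set q := (n : ℝ) * p / ((n : ℝ) - s * p) with hq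
  have hq0 : 0 < q := by positivity
  have hpq : p + q * (s * p / n) = q := by
    have hqn : q * ((n : ℝ) - s * p) = n * p := div_mul_cancel₀ _ hnt.ne'
    rw [mul_div_assoc', add_div' _ _ _ hn0.ne', div_eq_iff hn0.ne']
    linarith
  set c₀ := V / 8 with hc₀
  have hc₀0 : 0 < c₀ := by positivity
  set c := (α / 2 * (V / 4)) ^ (s * p / α) with hc
  have hc0 : 0 < c := by positivity
  set K := (min c (c₀ * (1 / 2) ^ (p + 1)) * (2 ^ (q + 1) / c₀) ^ (-(s * p / n)))⁻¹ with hK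
  have hK0 : 0 < K := by positivity
  refine ⟨(2 * K) ^ (1 / p), by positivity, ?_⟩
  intro Ω hΩ hconv Hα hHm hH0 hHα u hu hup
  have hx : ∀ᵐ x ∂(μH[(n : ℝ)].restrict (frontier Ω)), ∀ r : ℝ, 0 < r →
      ENNReal.ofReal (c₀ * r ^ (n : ℝ)) ≤ (μH[(n : ℝ)].restrict (frontier Ω)) (ball x r) ∨
        ENNReal.ofReal (c * r ^ (-(s * p))) ≤ ENNReal.ofReal (Hα x ^ (s * p / α)) := by
    filter_upwards [hHα, ae_restrict_mem isClosed_frontier.measurableSet] with x hx hxf r hr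
    have hxΩ : x ∉ Ω := fun h => by
      rw [hΩ.frontier_eq] at hxf
      exact hxf.2 h
    rw [Measure.restrict_apply measurableSet_ball, inter_comm]
    refine (hausdorffMeasure_frontier_or_fracMeanCurv hα0 hΩ hconv hxΩ hx hr hV).imp id
      fun h => ENNReal.ofReal_le_ofReal ?_
    have h1 : c * r ^ (-(s * p)) = (α / 2 * (V / 4) * r ^ (-α)) ^ (s * p / α) := by
      rw [Real.mul_rpow (by positivity) (by positivity), ← Real.rpow_mul hr.le]
      congr 2
      field_simp
    rw [h1]
    exact Real.rpow_le_rpow (by positivity) h (by positivity)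
  have key := lintegral_rpow_le_of_ball_or_weight (μH[(n : ℝ)].restrict (frontier Ω)) ht hnsp hq0
    hp0 hpq hc₀0 hc0 u hu (fun x => ENNReal.ofReal (Hα x ^ (s * p / α))) (by fun_prop) hx hup
  have hw : ∫⁻ x in frontier Ω, ENNReal.ofReal (Hα x ^ (s * p / α)) * ENNReal.ofReal (|u x| ^ p)
        ∂μH[(n : ℝ)]
      = ∫⁻ x in frontier Ω, ENNReal.ofReal (Hα x ^ (s * p / α) * |u x| ^ p) ∂μH[(n : ℝ)] := by
    refine setLIntegral_congr_fun isClosed_frontier.measurableSet fun x hx => ?_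
    exact (ENNReal.ofReal_mul (Real.rpow_nonneg (hH0 x hx) _)).symm
  rw [hw, ← hK] at key
  have hexp : ((n : ℝ) - s * p) / ((n : ℝ) * p) = (1 - s * p / n) * (1 / p) := by field_simp
  rw [hexp, ENNReal.rpow_mul, ← ENNReal.ofReal_rpow_of_pos (by positivity),
    ← ENNReal.mul_rpow_of_nonneg _ _ (by positivity)]
  refine ENNReal.rpow_le_rpow (key.trans ?_) (by positivity)
  rw [mul_comm 2 K, ENNReal.ofReal_mul hK0.le, mul_assoc]
  gcongr
  rw [mul_add, ← mul_assoc, ENNReal.ofReal_ofNat, one_div,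
    ENNReal.mul_inv_cancel (by norm_num) (by norm_num), one_mul]
  gcongr
  rw [two_mul]
  exact le_self_add
end

section
/- Let n ≥ 1 be an integer, let α ∈ (0,1) and s ∈ (0,1), and let Ω ⊂ ℝ^{n+1} be an open convex set. Then there exists a constant C > 0, depending only on n, α, and s, such that for every μH[n]-measurable subset E ⊂ ∂Ω with |E| < ∞ one has |E|^{(n−s)/n} ≤ C · ( Per_{∂Ω,s}(E) + ∫_E H_α(x)^{s/α} dx ), where both sides are taken in [0, +∞]. -/
open MeasureTheory Set Filter Metric
open scoped ENNReal NNReal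

/-- The fractional `s`-perimeter of `F` relative to `M ⊂ ℝ^{n+1}`. -/
noncomputable def fracPerimeterIn (n : ℕ) (s : ℝ)
    (M F : Set (EuclideanSpace ℝ (Fin (n+1)))) : ℝ≥0∞ :=
  ∫⁻ x in F, ∫⁻ y in M \ F, ENNReal.ofReal (dist x y ^ (-((n:ℝ) + s)))
    ∂μH[(n:ℝ)] ∂μH[(n:ℝ)]

theorem measure_mul_measure_le_of_forall_shift {G : Type*} [NormedAddCommGroup G]
    [MeasurableSpace G] [BorelSpace G] [SecondCountableTopology G] (μ : Measure G) [SFinite μ]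
    [μ.IsAddLeftInvariant] {S T : Set G} {x : G} {r : ℝ} {m : ℝ≥0∞} (hT : MeasurableSet T)
    (hSr : S ⊆ ball x r) (hTr : T ⊆ ball x r)
    (h : ∀ v, μ (S ∩ (fun w => w + v) ⁻¹' T) ≤ m) :
    μ S * μ T ≤ m * μ (ball 0 (2 * r)) := by
  have hmeas : MeasurableSet {p : G × G | p.1 + p.2 ∈ T} :=
    (measurable_fst.add measurable_snd) hT
  calc μ S * μ T = ∫⁻ _ in S, μ T ∂μ := by
        rw [setLIntegral_const, mul_comm]
    _ = ∫⁻ w in S, μ (Prod.mk w ⁻¹' {p : G × G | p.1 + p.2 ∈ T}) ∂μ :=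
        lintegral_congr fun w => (measure_preimage_add μ w T).symm
    _ = ∫⁻ v, (μ.restrict S) ((fun w => (w, v)) ⁻¹' {p : G × G | p.1 + p.2 ∈ T}) ∂μ := by
        rw [← Measure.prod_apply hmeas, Measure.prod_apply_symm hmeas]
    _ ≤ ∫⁻ v, (ball (0 : G) (2 * r)).indicator (fun _ => m) v ∂μ := by
        refine lintegral_mono fun v => ?_
        have hv : MeasurableSet ((fun w => (w, v)) ⁻¹' {p : G × G | p.1 + p.2 ∈ T}) :=
          (measurable_id.prodMk measurable_const) hmeas
        rw [Measure.restrict_apply hv, inter_comm]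
        by_cases hvr : v ∈ ball (0 : G) (2 * r)
        · rw [indicator_of_mem hvr]
          exact h v
        · rw [indicator_of_notMem hvr, nonpos_iff_eq_zero]
          convert measure_empty (μ := μ)
          refine eq_empty_of_forall_notMem fun w hw => hvr ?_
          have h1 := hSr hw.1
          have h2 : w + v ∈ ball x r := hTr hw.2
          rw [mem_ball, dist_eq_norm] at h1 h2
          rw [mem_ball_zero_iff]
          calc ‖v‖ = ‖(w + v - x) - (w - x)‖ := by congr 1; abel
            _ ≤ ‖w + v - x‖ + ‖w - x‖ := norm_sub_le _ _
            _ < 2 * r := by linarith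
    _ = m * μ (ball 0 (2 * r)) := by
        rw [lintegral_indicator measurableSet_ball, setLIntegral_const]

/-- The projection of `ℝ^{n+1}` onto the coordinate hyperplane `y i = 0` along `v`. -/
noncomputable def coordProj {n : ℕ} (i : Fin (n + 1)) (v : EuclideanSpace ℝ (Fin (n + 1)))
    (y : EuclideanSpace ℝ (Fin (n + 1))) : Fin n → ℝ :=
  fun j => y (i.succAbove j) - y i * (v (i.succAbove j) / v i)

theorem coordProj_add_smul {n : ℕ} {i : Fin (n + 1)} {v : EuclideanSpace ℝ (Fin (n + 1))}
    (hv : v i ≠ 0) (y : EuclideanSpace ℝ (Fin (n + 1))) (t : ℝ) :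
    coordProj i v (y + t • v) = coordProj i v y := by
  funext j
  simp only [coordProj, PiLp.add_apply, PiLp.smul_apply, smul_eq_mul]
  field_simp
  ring

theorem lipschitzWith_coordProj {n : ℕ} {i : Fin (n + 1)} {v : EuclideanSpace ℝ (Fin (n + 1))}
    (hv : ∀ j, |v j| ≤ |v i|) : LipschitzWith 2 (coordProj i v) := by
  refine LipschitzWith.of_dist_le_mul fun y z => ?_
  refine (dist_pi_le_iff (by positivity)).2 fun j => ?_
  have hc : |v (i.succAbove j) / v i| ≤ 1 := by
    rw [abs_div]
    exact div_le_one_of_le₀ (hv _) (abs_nonneg _)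
  have h1 : ∀ k, |y k - z k| ≤ dist y z := fun k => by
    simpa [dist_eq_norm] using PiLp.norm_apply_le (y - z) k
  rw [Real.dist_eq]
  calc |coordProj i v y j - coordProj i v z j|
      = |(y (i.succAbove j) - z (i.succAbove j))
          - (y i - z i) * (v (i.succAbove j) / v i)| := by
        simp only [coordProj]; congr 1; ring
    _ ≤ |y (i.succAbove j) - z (i.succAbove j)|
          + |(y i - z i) * (v (i.succAbove j) / v i)| := abs_sub _ _
    _ ≤ dist y z + dist y z * 1 := by
        rw [abs_mul]
        gcongr
        · exact h1 _
        · exact h1 _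
    _ = ((2 : ℝ≥0) : ℝ) * dist y z := by push_cast; ring

theorem volume_le_of_subset_preimage_coordProj {n : ℕ} {i : Fin (n + 1)}
    {v x : EuclideanSpace ℝ (Fin (n + 1))} {r : ℝ} {S : Set (EuclideanSpace ℝ (Fin (n + 1)))}
    (hS : S ⊆ ball x r) {P : Set (Fin n → ℝ)} (hP : S ⊆ coordProj i v ⁻¹' P) :
    volume S ≤ ENNReal.ofReal (2 * r) * volume P := by
  set Q := toMeasurable volume P
  have hQ : MeasurableSet Q := measurableSet_toMeasurable _ _
  set B : Set (ℝ × (Fin n → ℝ)) :=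
    {p | p.1 ∈ ball (x i) r ∧ (fun j => p.2 j - p.1 * (v (i.succAbove j) / v i)) ∈ Q}
  have hB : MeasurableSet B := by
    refine MeasurableSet.inter (measurable_fst measurableSet_ball) ?_
    have : Measurable fun p : ℝ × (Fin n → ℝ) =>
      (fun j => p.2 j - p.1 * (v (i.succAbove j) / v i)) := by fun_prop
    exact this hQ
  have hmp := (volume_preserving_piFinSuccAbove (fun _ : Fin (n + 1) => ℝ) i).comp
    (PiLp.volume_preserving_ofLp (Fin (n + 1)))
  calc volume S ≤ volume
        ((MeasurableEquiv.piFinSuccAbove (fun _ : Fin (n + 1) => ℝ) i ∘ WithLp.ofLp) ⁻¹' B) := by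
        refine measure_mono fun y hy => ⟨?_, subset_toMeasurable _ _ (hP hy)⟩
        have h1 : |y i - x i| ≤ dist y x := by
          simpa [dist_eq_norm] using PiLp.norm_apply_le (y - x) i
        exact h1.trans_lt (hS hy)
    _ = volume B := hmp.measure_preimage hB.nullMeasurableSet
    _ = ∫⁻ t, volume (Prod.mk t ⁻¹' B) := Measure.prod_apply hB
    _ ≤ ∫⁻ t, (ball (x i) r).indicator (fun _ => volume P) t := by
        refine lintegral_mono fun t => ?_
        by_cases ht : t ∈ ball (x i) r
        · rw [indicator_of_mem ht]
          calc volume (Prod.mk t ⁻¹' B)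
              ≤ volume ((fun p => p + fun j => -(t * (v (i.succAbove j) / v i))) ⁻¹' Q) :=
                measure_mono fun p hp => by
                  have := hp.2
                  simp only [sub_eq_add_neg] at this
                  exact this
            _ = volume P := by rw [measure_preimage_add_right, measure_toMeasurable]
        · rw [indicator_of_notMem ht, nonpos_iff_eq_zero]
          convert measure_empty (μ := (volume : Measure (Fin n → ℝ)))
          exact eq_empty_of_forall_notMem fun p hp => ht hp.1
    _ = ENNReal.ofReal (2 * r) * volume P := by
        rw [lintegral_indicator measurableSet_ball, setLIntegral_const, Real.volume_ball, mul_comm]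

theorem exists_mem_segment_frontier_s1 {V : Type*} [NormedAddCommGroup V] [NormedSpace ℝ V]
    {Ω : Set V} (hΩ : IsOpen Ω) {a b : V} (ha : a ∈ Ω) (hb : b ∉ Ω) :
    ∃ z ∈ segment ℝ a b, z ∈ frontier Ω := by
  by_contra! hcon
  have hcov : segment ℝ a b ⊆ Ω ∪ (closure Ω)ᶜ := fun z hz => by
    by_contra hz'
    rw [mem_union, not_or, mem_compl_iff, not_not] at hz'
    exact hcon z hz (by rw [hΩ.frontier_eq]; exact ⟨hz'.2, hz'.1⟩)
  rcases isPreconnected_iff_subset_of_disjoint.1 (convex_segment a b).isPreconnected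
    Ω (closure Ω)ᶜ hΩ isClosed_closure.isOpen_compl hcov
    (by
      refine eq_empty_of_forall_notMem fun z hz => hz.2.2 (subset_closure hz.2.1)) with h | h
  · exact hb (h (right_mem_segment ℝ a b))
  · exact h (left_mem_segment ℝ a b) (subset_closure ha)

theorem dist_add_self_sub_left {V : Type*} [SeminormedAddCommGroup V] (x y : V) :
    dist (x + x - y) x = dist y x := by
  rw [dist_eq_norm, dist_eq_norm, ← norm_neg (y - x)]
  congr 1
  abel

theorem Convex.add_self_sub_notMem {V : Type*} [AddCommGroup V] [Module ℝ V] {Ω : Set V}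
    (hconv : Convex ℝ Ω) {x y : V} (hx : x ∉ Ω) (hy : y ∈ Ω) : x + x - y ∉ Ω := fun hy' => hx <| by
  have := hconv hy hy' (by norm_num : (0 : ℝ) ≤ 1 / 2) (by norm_num : (0 : ℝ) ≤ 1 / 2)
    (by norm_num)
  convert this using 1
  module

theorem volume_real_ball_eq {n : ℕ} (y : EuclideanSpace ℝ (Fin (n + 1))) {ρ : ℝ} (hρ : 0 ≤ ρ) :
    volume.real (ball y ρ)
      = ρ ^ (n + 1) * volume.real (ball (0 : EuclideanSpace ℝ (Fin (n + 1))) 1) := by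
  rw [measureReal_def, Measure.addHaar_ball volume y hρ, ENNReal.toReal_mul,
    ENNReal.toReal_ofReal (by positivity), finrank_euclideanSpace_fin, measureReal_def]

theorem volume_real_ball_zero_one_pos (n : ℕ) :
    0 < volume.real (ball (0 : EuclideanSpace ℝ (Fin (n + 1))) 1) :=
  ENNReal.toReal_pos (measure_ball_pos volume _ one_pos).ne' measure_ball_lt_top.ne

theorem ball_volume_le_mul_hausdorffMeasure_frontier {n : ℕ}
    {Ω : Set (EuclideanSpace ℝ (Fin (n + 1)))} (hΩ : IsOpen Ω) (hconv : Convex ℝ Ω)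
    {x : EuclideanSpace ℝ (Fin (n + 1))} (hx : x ∉ Ω) {r : ℝ} (hr : 0 < r)
    (hvol : volume.real (ball x r) ≤ 4 * volume.real (Ω ∩ ball x r)) :
    ENNReal.ofReal (r ^ n * volume.real (ball (0 : EuclideanSpace ℝ (Fin (n + 1))) 1))
      ≤ ENNReal.ofReal (64 * 4 ^ n) * μH[(n : ℝ)] (frontier Ω ∩ ball x r) := by
  rcases eq_or_ne (μH[(n : ℝ)] (frontier Ω ∩ ball x r)) ⊤ with htop | htop
  · rw [htop, ENNReal.mul_top (by simp)]
    exact le_top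
  set S := Ω ∩ ball x r
  set T := (fun y => x + x - y) ⁻¹' S
  have hSm : MeasurableSet S := hΩ.measurableSet.inter measurableSet_ball
  have hTm : MeasurableSet T := (measurable_const.sub measurable_id) hSm
  have hTvol : volume T = volume S :=
    (Measure.measurePreserving_sub_left volume (x + x)).measure_preimage hSm.nullMeasurableSet
  have hTr : T ⊆ ball x r := fun y hy => by
    have h1 : dist (x + x - y) x < r := hy.2
    rwa [dist_add_self_sub_left] at h1
  have hTΩ : ∀ y ∈ T, y ∉ Ω := fun y hy hyΩ => hconv.add_self_sub_notMem hx hyΩ hy.1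
  have key := measure_mul_measure_le_of_forall_shift volume (S := S) (T := T) (x := x) (r := r)
    (m := ENNReal.ofReal (2 * r) * (2 ^ n * μH[(n : ℝ)] (frontier Ω ∩ ball x r))) hTm
    inter_subset_right hTr (fun v => by
      rcases eq_or_ne v 0 with rfl | hv
      · have : S ∩ (fun w => w + 0) ⁻¹' T = ∅ :=
          eq_empty_of_forall_notMem fun w hw => hTΩ w (by simpa using hw.2) hw.1.1
        rw [this, measure_empty]
        exact zero_le
      obtain ⟨i, hi⟩ := Finite.exists_max fun j => |v j|
      have hvi : v i ≠ 0 := fun h0 => hv <| by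
        ext j
        have := hi j
        rw [h0, abs_zero] at this
        simpa using abs_nonpos_iff.1 this
      refine (volume_le_of_subset_preimage_coordProj (i := i) (v := v)
        (P := coordProj i v '' (frontier Ω ∩ ball x r))
        (inter_subset_left.trans inter_subset_right) fun w hw => ?_).trans ?_
      · obtain ⟨z, hz, hzf⟩ := exists_mem_segment_frontier_s1 hΩ hw.1.1 (hTΩ _ hw.2)
        refine ⟨z, ⟨hzf, (convex_ball x r).segment_subset hw.1.2 (hTr hw.2) hz⟩, ?_⟩
        rw [segment_eq_image'] at hz
        obtain ⟨t, -, rfl⟩ := hz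
        simp only [add_sub_cancel_left]
        exact coordProj_add_smul hvi w t
      · gcongr
        have := (lipschitzWith_coordProj hi).hausdorffMeasure_image_le (Nat.cast_nonneg n)
          (frontier Ω ∩ ball x r)
        have hH : (μH[(n : ℝ)] : Measure (Fin n → ℝ)) = volume := by
          simpa using hausdorffMeasure_pi_real (ι := Fin n)
        rw [hH] at this
        simpa using this)
  rw [hTvol] at key
  set M := (μH[(n : ℝ)] (frontier Ω ∩ ball x r)).toReal
  have hM : 0 ≤ M := ENNReal.toReal_nonneg
  have key' : volume.real S * volume.real S
      ≤ 2 * r * (2 ^ n * M) * volume.real (ball (0 : EuclideanSpace ℝ (Fin (n + 1))) (2 * r)) := by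
    have := ENNReal.toReal_mono (by
      refine ENNReal.mul_ne_top (ENNReal.mul_ne_top ENNReal.ofReal_ne_top
        (ENNReal.mul_ne_top (by simp) htop)) measure_ball_lt_top.ne) key
    simpa [ENNReal.toReal_mul, ENNReal.toReal_ofReal hr.le, measureReal_def] using this
  rw [volume_real_ball_eq _ (by positivity)] at key'
  rw [volume_real_ball_eq _ hr.le] at hvol
  set V := volume.real (ball (0 : EuclideanSpace ℝ (Fin (n + 1))) 1)
  have hV : 0 < V := volume_real_ball_zero_one_pos n
  rw [← ENNReal.ofReal_toReal htop, ← ENNReal.ofReal_mul (by positivity)]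
  refine ENNReal.ofReal_le_ofReal ?_
  change r ^ n * V ≤ 64 * 4 ^ n * M
  have h1 : (r ^ (n + 1) * V) * (r ^ (n + 1) * V) ≤ 16 * (volume.real S * volume.real S) := by
    have := mul_self_le_mul_self (by positivity) hvol
    linarith
  have h2 : (r ^ n * V) * (r ^ (n + 2) * V) ≤ (64 * 4 ^ n * M) * (r ^ (n + 2) * V) := by
    calc _ = (r ^ (n + 1) * V) * (r ^ (n + 1) * V) := by ring
      _ ≤ 16 * (2 * r * (2 ^ n * M) * ((2 * r) ^ (n + 1) * V)) := by linarith
      _ = _ := by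
        rw [show (4 : ℝ) ^ n = 2 ^ n * 2 ^ n by rw [← mul_pow]; norm_num]
        ring
  exact le_of_mul_le_mul_right h2 (by positivity)

theorem integrableOn_dist_rpow_neg {n : ℕ} {p ε : ℝ} (hp : (n : ℝ) < p) (hε : 0 < ε)
    (x : EuclideanSpace ℝ (Fin n)) :
    IntegrableOn (fun y => dist y x ^ (-p)) {y : EuclideanSpace ℝ (Fin n) | ε < dist y x} := by
  have hp0 : 0 < p := n.cast_nonneg.trans_lt hp
  have h1 : Integrable (fun y : EuclideanSpace ℝ (Fin n) => (1 + ‖y - x‖) ^ (-p)) :=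
    (integrable_one_add_norm (μ := volume) (by simpa using hp)).comp_sub_right x
  have hms : MeasurableSet {y : EuclideanSpace ℝ (Fin n) | ε < dist y x} :=
    measurableSet_lt measurable_const (by fun_prop)
  refine Integrable.mono' (h1.const_mul ((1 + 1 / ε) ^ p)).integrableOn
    (Measurable.aestronglyMeasurable (by fun_prop)) ?_
  refine (ae_restrict_iff' hms).2 (Eventually.of_forall fun y hy => ?_)
  have hy' : ε < dist y x := hy
  have hd : 0 < dist y x := hε.trans hy'
  rw [Real.norm_of_nonneg (by positivity), ← dist_eq_norm, Real.rpow_neg hd.le,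
    Real.rpow_neg (by positivity), ← div_eq_mul_inv, ← Real.div_rpow (by positivity) (by positivity),
    ← Real.inv_rpow hd.le]
  refine Real.rpow_le_rpow (by positivity) ?_ hp0.le
  rw [le_div_iff₀ (by positivity), inv_mul_eq_div, add_div, div_self hd.ne', add_comm]
  gcongr

theorem le_of_isFracMeanCurv {n : ℕ} {α : ℝ} (hα : 0 < α)
    {Ω : Set (EuclideanSpace ℝ (Fin (n + 1)))} (hΩ : IsOpen Ω) (hconv : Convex ℝ Ω)
    {x : EuclideanSpace ℝ (Fin (n + 1))} (hx : x ∉ Ω) {r : ℝ} (hr : 0 < r)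
    (hvol : 4 * volume.real (Ω ∩ ball x r) ≤ volume.real (ball x r)) {h : ℝ}
    (hh : IsFracMeanCurv n α Ω x h) :
    α / 8 * volume.real (ball (0 : EuclideanSpace ℝ (Fin (n + 1))) 1) * r ^ (-α) ≤ h := by
  refine ge_of_tendsto hh ?_
  filter_upwards [Ioc_mem_nhdsGT (show (0 : ℝ) < r / 4 by positivity)] with ε hε
  obtain ⟨hε0, hεr⟩ := hε
  set V := volume.real (ball (0 : EuclideanSpace ℝ (Fin (n + 1))) 1)
  set p : ℝ := (n : ℝ) + 1 + α with hp
  set D := {y : EuclideanSpace ℝ (Fin (n + 1)) | ε < dist y x}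
  have hD : MeasurableSet D := measurableSet_lt measurable_const (by fun_prop)
  set f : EuclideanSpace ℝ (Fin (n + 1)) → ℝ := fun y =>
    Ωᶜ.indicator (fun _ => (1 : ℝ)) y - Ω.indicator (fun _ => (1 : ℝ)) y with hf
  have hfin : ∀ y ∈ Ω, f y = -1 := fun y hy => by simp [hf, hy]
  have hfout : ∀ y ∉ Ω, f y = 1 := fun y hy => by simp [hf, hy]
  have hfm : Measurable f :=
    (measurable_const.indicator hΩ.measurableSet.compl).sub
      (measurable_const.indicator hΩ.measurableSet)
  set F := D.indicator fun y => f y * dist y x ^ (-p)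
  have hFint : Integrable F := by
    refine IntegrableOn.integrable_indicator ?_ hD
    refine Integrable.mono (integrableOn_dist_rpow_neg (n := n + 1) (p := p)
      (by push_cast; linarith) hε0 x) (Measurable.aestronglyMeasurable (by fun_prop))
      (Eventually.of_forall fun y => ?_)
    rw [norm_mul]
    refine mul_le_of_le_one_left (norm_nonneg _) ?_
    by_cases hy : y ∈ Ω
    · simp [hfin y hy]
    · simp [hfout y hy]
  have hmid : ∀ y ∈ Ω, x + x - y ∉ Ω := fun y hy => hconv.add_self_sub_notMem hx hy
  have hdist : ∀ y, dist (x + x - y) x = dist y x := dist_add_self_sub_left x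
  set S := Ω ∩ ball x r
  have hSm : MeasurableSet S := hΩ.measurableSet.inter measurableSet_ball
  set T := (fun y => x + x - y) ⁻¹' S
  have hTm : MeasurableSet T := (measurable_const.sub measurable_id) hSm
  have hTvol : volume.real T = volume.real S := by
    rw [measureReal_def, measureReal_def]
    congr 1
    exact (Measure.measurePreserving_sub_left volume (x + x)).measure_preimage
      hSm.nullMeasurableSet
  set A := (D ∩ ball x r) \ (S ∪ T)
  have hA : MeasurableSet A := (hD.inter measurableSet_ball).diff (hSm.union hTm)
  have hAtop : volume A ≠ ⊤ := measure_ne_top_of_subset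
    (sdiff_subset.trans inter_subset_right) measure_ball_lt_top.ne
  have hle : ∀ y, A.indicator (fun _ => 2 * r ^ (-p)) y ≤ F y + F (x + x - y) := fun y => by
    have hFy : F y + F (x + x - y) = D.indicator (fun y => (f y + f (x + x - y)) *
        dist y x ^ (-p)) y := by
      by_cases hy : y ∈ D
      · have hy' : x + x - y ∈ D := by
          change ε < dist (x + x - y) x
          rw [hdist]
          exact hy
        simp only [F, indicator_of_mem hy, indicator_of_mem hy', hdist]
        ring
      · have hy' : x + x - y ∉ D := by
          change ¬ ε < dist (x + x - y) x
          rw [hdist]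
          exact hy
        simp only [F, indicator_of_notMem hy, indicator_of_notMem hy', add_zero]
    rw [hFy]
    have hnn : ∀ y, 0 ≤ f y + f (x + x - y) := fun y => by
      by_cases hy : y ∈ Ω
      · rw [hfin y hy, hfout _ (hmid y hy)]; norm_num
      · rw [hfout y hy]
        by_cases hy' : x + x - y ∈ Ω
        · rw [hfin _ hy']; norm_num
        · rw [hfout _ hy']; norm_num
    by_cases hy : y ∈ A
    · obtain ⟨⟨hyD, hyr⟩, hyST⟩ := hy
      rw [mem_union, not_or] at hyST
      have hy1 : y ∉ Ω := fun h => hyST.1 ⟨h, hyr⟩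
      have hy2 : x + x - y ∉ Ω := fun h => hyST.2
        ⟨h, by rw [mem_ball, hdist]; exact hyr⟩
      have hd : 0 < dist y x := hε0.trans hyD
      rw [indicator_of_mem hyD, indicator_of_mem (by exact ⟨⟨hyD, hyr⟩, by simp [hyST]⟩),
        hfout _ hy1, hfout _ hy2]
      norm_num
      exact Real.rpow_le_rpow_of_nonpos hd (mem_ball.1 hyr).le
        (neg_nonpos.2 (by positivity))
    · rw [indicator_of_notMem hy]
      exact indicator_nonneg (fun z _ => mul_nonneg (hnn z) (by positivity)) y
  have hint : 2 * r ^ (-p) * volume.real A ≤ 2 * ∫ y, F y := by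
    calc 2 * r ^ (-p) * volume.real A = ∫ y, A.indicator (fun _ => 2 * r ^ (-p)) y := by
          rw [integral_indicator hA, setIntegral_const, smul_eq_mul, mul_comm]
      _ ≤ ∫ y, (F y + F (x + x - y)) :=
          integral_mono ((integrable_indicator_iff hA).2 (integrableOn_const hAtop))
            (hFint.add (hFint.comp_sub_left (x + x))) hle
      _ = 2 * ∫ y, F y := by
          rw [integral_add hFint (hFint.comp_sub_left (x + x)),
            integral_sub_left_eq_self F volume (x + x)]
          ring
  have hbr : volume.real (ball x r) = r ^ (n + 1) * V := volume_real_ball_eq x hr.le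
  have hV : 0 ≤ V := measureReal_nonneg
  have hAvol : r ^ (n + 1) * V / 4 ≤ volume.real A := by
    have hsub : ball x r ⊆ A ∪ (closedBall x ε ∪ (S ∪ T)) := fun y hy => by
      by_cases hyD : y ∈ D
      · by_cases hyST : y ∈ S ∪ T
        · exact Or.inr (Or.inr hyST)
        · exact Or.inl ⟨⟨hyD, hy⟩, hyST⟩
      · exact Or.inr (Or.inl (mem_closedBall.2 (not_lt.1 hyD)))
    have hTtop : volume T ≠ ⊤ := by
      refine measure_ne_top_of_subset (fun y hy => ?_) (measure_ball_lt_top (x := x) (r := r)).ne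
      have : dist (x + x - y) x < r := hy.2
      rwa [hdist] at this
    have hStop : volume S ≠ ⊤ :=
      measure_ne_top_of_subset inter_subset_right measure_ball_lt_top.ne
    have h1 := measureReal_mono (μ := volume) hsub (by
      simp [hAtop, hTtop, hStop, measure_closedBall_lt_top.ne])
    have h2 := measureReal_union_le (μ := volume) A (closedBall x ε ∪ (S ∪ T))
    have h3 := measureReal_union_le (μ := volume) (closedBall x ε) (S ∪ T)
    have h4 := measureReal_union_le (μ := volume) S T
    have h5 : volume.real (closedBall x ε) ≤ r ^ (n + 1) * V / 4 := by
      have h6 : volume.real (closedBall x ε) = ε ^ (n + 1) * V := by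
        rw [measureReal_def, Measure.addHaar_closedBall_eq_addHaar_ball, ← measureReal_def,
          volume_real_ball_eq x hε0.le]
      have h7 : ε ^ (n + 1) ≤ r ^ (n + 1) / 4 := by
        calc ε ^ (n + 1) ≤ (r / 4) ^ (n + 1) := by gcongr
          _ = r ^ (n + 1) / 4 ^ (n + 1) := div_pow _ _ _
          _ ≤ r ^ (n + 1) / 4 := by
            gcongr
            exact le_self_pow₀ (by norm_num) (by omega)
      rw [h6]
      nlinarith
    linarith
  have hrp : r ^ (-p) * r ^ (n + 1) = r ^ (-α) := by
    rw [← Real.rpow_natCast r (n + 1), ← Real.rpow_add hr]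
    congr 1
    push_cast
    ring
  have hfinal : V / 4 * r ^ (-α) ≤ ∫ y, F y := by
    have h1 : r ^ (-p) * (r ^ (n + 1) * V / 4) ≤ r ^ (-p) * volume.real A := by gcongr
    rw [← hrp]
    linarith
  have hFM : fracMCIntegral n α Ω x ε = α / 2 * ∫ y, F y := by
    rw [fracMCIntegral, ← integral_indicator hD]
  rw [hFM]
  calc α / 8 * V * r ^ (-α) = α / 2 * (V / 4 * r ^ (-α)) := by ring
    _ ≤ _ := by gcongr

theorem le_lintegral_add_fracMeanCurv {n : ℕ} {α s : ℝ} (hα : 0 < α) (hs : 0 < s)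
    {Ω : Set (EuclideanSpace ℝ (Fin (n + 1)))} (hΩ : IsOpen Ω) (hconv : Convex ℝ Ω)
    {E : Set (EuclideanSpace ℝ (Fin (n + 1)))} (hE : MeasurableSet E)
    {x : EuclideanSpace ℝ (Fin (n + 1))} (hxE : x ∈ E) (hxΩ : x ∉ Ω)
    {h : ℝ} (hh : IsFracMeanCurv n α Ω x h) {m R K : ℝ} (hm : 0 < m)
    (hEm : μH[(n : ℝ)] E = ENNReal.ofReal m) (hR : 0 < R)
    (hK : K = 128 * 4 ^ n / volume.real (ball (0 : EuclideanSpace ℝ (Fin (n + 1))) 1))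
    (hRK : R ^ n = K * m) :
    ENNReal.ofReal (min (1 / K)
        ((α / 8 * volume.real (ball (0 : EuclideanSpace ℝ (Fin (n + 1))) 1)) ^ (s / α)) * R ^ (-s))
      ≤ (∫⁻ y in frontier Ω \ E, ENNReal.ofReal (dist x y ^ (-((n : ℝ) + s))) ∂μH[(n : ℝ)])
        + ENNReal.ofReal (h ^ (s / α)) := by
  set V := volume.real (ball (0 : EuclideanSpace ℝ (Fin (n + 1))) 1)
  have hV : 0 < V := volume_real_ball_zero_one_pos n
  have hK0 : 0 < K := hK ▸ by positivity
  rcases le_total (volume.real (ball x R)) (4 * volume.real (Ω ∩ ball x R)) with hvol | hvol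
  · refine le_add_right ?_
    have h1 := ball_volume_le_mul_hausdorffMeasure_frontier hΩ hconv hxΩ hR hvol
    have h2 : ENNReal.ofReal m + ENNReal.ofReal m ≤ μH[(n : ℝ)] (frontier Ω ∩ ball x R) := by
      have h3 : R ^ n * V = 64 * 4 ^ n * (m + m) := by
        rw [hRK, hK]
        field_simp
        ring
      rw [h3, ENNReal.ofReal_mul (by positivity)] at h1
      rw [← ENNReal.ofReal_add hm.le hm.le]
      exact (ENNReal.mul_le_mul_iff_right (by simp) ENNReal.ofReal_ne_top).1 h1
    set B := (frontier Ω \ E) ∩ ball x R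
    have hB : MeasurableSet B :=
      (isClosed_frontier.measurableSet.diff hE).inter measurableSet_ball
    have h4 : ENNReal.ofReal m ≤ μH[(n : ℝ)] B := by
      have h5 : frontier Ω ∩ ball x R ⊆ E ∪ B := fun y hy => by
        by_cases hyE : y ∈ E
        · exact Or.inl hyE
        · exact Or.inr ⟨⟨hy.1, hyE⟩, hy.2⟩
      have h6 := h2.trans ((measure_mono h5).trans (measure_union_le _ _))
      rw [hEm] at h6
      exact (ENNReal.add_le_add_iff_left ENNReal.ofReal_ne_top).1 h6
    calc _ ≤ ENNReal.ofReal (R ^ (-((n : ℝ) + s)) * m) := by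
          refine ENNReal.ofReal_le_ofReal ?_
          have h7 : R ^ (-((n : ℝ) + s)) * m = 1 / K * R ^ (-s) := by
            rw [neg_add, Real.rpow_add hR, Real.rpow_neg hR.le, Real.rpow_natCast, hRK]
            field_simp
          rw [h7]
          gcongr
          exact min_le_left _ _
      _ = ENNReal.ofReal (R ^ (-((n : ℝ) + s))) * ENNReal.ofReal m :=
          ENNReal.ofReal_mul (by positivity)
      _ ≤ ENNReal.ofReal (R ^ (-((n : ℝ) + s))) * μH[(n : ℝ)] B := by gcongr
      _ = ∫⁻ _ in B, ENNReal.ofReal (R ^ (-((n : ℝ) + s))) ∂μH[(n : ℝ)] :=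
          (setLIntegral_const _ _).symm
      _ ≤ ∫⁻ y in B, ENNReal.ofReal (dist x y ^ (-((n : ℝ) + s))) ∂μH[(n : ℝ)] := by
          refine setLIntegral_mono' hB fun y hy => ENNReal.ofReal_le_ofReal ?_
          have hne : x ≠ y := fun hxy => hy.1.2 (hxy ▸ hxE)
          exact Real.rpow_le_rpow_of_nonpos (dist_pos.2 hne) (mem_ball'.1 hy.2).le
            (neg_nonpos.2 (by positivity))
      _ ≤ _ := lintegral_mono_set inter_subset_left
  · refine le_add_left (ENNReal.ofReal_le_ofReal ?_)
    have h1 := le_of_isFracMeanCurv hα hΩ hconv hxΩ hR hvol hh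
    calc _ ≤ (α / 8 * V) ^ (s / α) * R ^ (-s) := by
          gcongr
          exact min_le_right _ _
      _ = (α / 8 * V * R ^ (-α)) ^ (s / α) := by
          rw [Real.mul_rpow (x := α / 8 * V) (by positivity) (by positivity), ← Real.rpow_mul hR.le]
          congr 2
          field_simp
      _ ≤ h ^ (s / α) := by gcongr

/-- Fractional Michael-Simon type isoperimetric inequality on convex hypersurfaces. -/
theorem fractional_michael_simon_isoperimetric_convex
    (n : ℕ) (hn : 1 ≤ n) (α s : ℝ)
    (hα : α ∈ Set.Ioo (0:ℝ) 1) (hs : s ∈ Set.Ioo (0:ℝ) 1) :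
    ∃ C : ℝ, 0 < C ∧
      ∀ (Ω : Set (EuclideanSpace ℝ (Fin (n+1)))), IsOpen Ω → Convex ℝ Ω →
      ∀ (Hα : EuclideanSpace ℝ (Fin (n+1)) → ℝ), Measurable Hα →
        (∀ x ∈ frontier Ω, 0 ≤ Hα x) →
        (∀ᵐ x ∂(μH[(n:ℝ)].restrict (frontier Ω)), IsFracMeanCurv n α Ω x (Hα x)) →
      ∀ (E : Set (EuclideanSpace ℝ (Fin (n+1)))), MeasurableSet E → E ⊆ frontier Ω →
        μH[(n:ℝ)] E < ⊤ →
        (μH[(n:ℝ)] E) ^ (((n:ℝ) - s) / (n:ℝ))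
          ≤ ENNReal.ofReal C *
            (fracPerimeterIn n s (frontier Ω) E
              + ∫⁻ x in E, ENNReal.ofReal (Hα x ^ (s / α)) ∂μH[(n:ℝ)]) := by
  obtain ⟨hα0, -⟩ := hα
  obtain ⟨hs0, hs1⟩ := hs
  have hn0 : (0 : ℝ) < n := by exact_mod_cast hn
  have hn1 : (1 : ℝ) ≤ n := by exact_mod_cast hn
  set V := volume.real (ball (0 : EuclideanSpace ℝ (Fin (n + 1))) 1) with hVdef
  have hV : 0 < V := volume_real_ball_zero_one_pos n
  set K : ℝ := 128 * 4 ^ n / V with hK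
  have hK0 : 0 < K := by positivity
  set c : ℝ := min (1 / K) ((α / 8 * V) ^ (s / α))
  have hc : 0 < c := lt_min (by positivity) (by positivity)
  refine ⟨(c * K ^ (-(s / n)))⁻¹, by positivity, ?_⟩
  intro Ω hΩ hconv Hα hHm _ hH E hE hEΩ hEfin
  rcases eq_or_ne (μH[(n : ℝ)] E) 0 with h0 | h0
  · rw [h0, ENNReal.zero_rpow_of_pos (div_pos (by linarith) hn0)]
    exact zero_le
  set m := (μH[(n : ℝ)] E).toReal
  have hm : 0 < m := ENNReal.toReal_pos h0 hEfin.ne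
  have hEm : μH[(n : ℝ)] E = ENNReal.ofReal m := (ENNReal.ofReal_toReal hEfin.ne).symm
  set R := (K * m) ^ ((n : ℝ)⁻¹)
  have hR : 0 < R := by positivity
  have hRn : R ^ n = K * m := Real.rpow_inv_natCast_pow (by positivity) (by omega)
  have hRs : R ^ (-s) = K ^ (-(s / n)) * m ^ (-(s / n)) := by
    rw [← Real.rpow_mul (by positivity), ← Real.mul_rpow hK0.le hm.le]
    congr 1
    field_simp
  have hpt : ∀ᵐ x ∂(μH[(n : ℝ)].restrict E), ENNReal.ofReal (c * R ^ (-s))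
      ≤ (∫⁻ y in frontier Ω \ E, ENNReal.ofReal (dist x y ^ (-((n : ℝ) + s))) ∂μH[(n : ℝ)])
        + ENNReal.ofReal (Hα x ^ (s / α)) := by
    filter_upwards [ae_restrict_of_ae_restrict_of_subset hEΩ hH, ae_restrict_mem hE] with x hx hxE
    have hxΩ : x ∉ Ω := fun h => by
      have := hEΩ hxE
      rw [hΩ.frontier_eq] at this
      exact this.2 h
    exact le_lintegral_add_fracMeanCurv hα0 hs0 hΩ hconv hE hxE hxΩ hx hm hEm hR hK hRn
  have hint : ENNReal.ofReal (c * R ^ (-s)) * ENNReal.ofReal m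
      ≤ fracPerimeterIn n s (frontier Ω) E
        + ∫⁻ x in E, ENNReal.ofReal (Hα x ^ (s / α)) ∂μH[(n : ℝ)] := by
    rw [fracPerimeterIn, ← lintegral_add_right _ (by fun_prop), ← hEm, ← setLIntegral_const]
    exact lintegral_mono_ae hpt
  calc _ = ENNReal.ofReal ((c * K ^ (-(s / n)))⁻¹)
        * (ENNReal.ofReal (c * R ^ (-s)) * ENNReal.ofReal m) := by
        rw [hEm, ENNReal.ofReal_rpow_of_pos hm, ← ENNReal.ofReal_mul (by positivity),
          ← ENNReal.ofReal_mul (by positivity)]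
        congr 1
        have h1 : m ^ (((n : ℝ) - s) / n) = m ^ (-(s / n)) * m := by
          rw [← Real.rpow_add_one hm.ne']
          congr 1
          field_simp
          ring
        rw [h1, hRs]
        have : K ^ (-(s / n)) ≠ 0 := by positivity
        field_simp
    _ ≤ _ := by gcongr
end

section
/- Let n ≥ 1 be an integer, let α ∈ (0,1) and s ∈ (0,1), and let Ω ⊂ ℝ^{n+1} be an open convex set whose boundary has finite n-dimensional Hausdorff measure, |∂Ω| < ∞. Then there exists a constant C > 0, depending only on n, α, and s, such that |∂Ω|^{(n−s)/n} ≤ C · ∫_{∂Ω} H_α(x)^{s/α} dx. -/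
open MeasureTheory Set Filter Metric
open scoped ENNReal NNReal

/-- A line through a point of `Ω` that leaves `Ω` meets the frontier of `Ω`. -/
lemma exists_add_smul_mem_frontier {E : Type*} [NormedAddCommGroup E] [NormedSpace ℝ E]
    {Ω : Set E} {ν p : E} (hp : p ∈ Ω) (hν : ∃ t : ℝ, p + t • ν ∉ Ω) :
    ∃ t : ℝ, p + t • ν ∈ frontier Ω := by
  have hg : Continuous fun t : ℝ => p + t • ν := by fun_prop
  obtain ⟨t, ht⟩ : (frontier ((fun t : ℝ => p + t • ν) ⁻¹' Ω)).Nonempty := by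
    rw [nonempty_frontier_iff]
    refine ⟨⟨0, by simpa using hp⟩, ?_⟩
    obtain ⟨t, ht⟩ := hν
    exact fun h => ht (by simpa using (h ▸ mem_univ t : t ∈ (fun t : ℝ => p + t • ν) ⁻¹' Ω))
  exact ⟨t, hg.frontier_preimage_subset Ω ht⟩

/-- At a frontier point of an open convex set there is a unit direction all of whose lines leave
the set. -/
lemma exists_unit_direction_leaving {E : Type*} [NormedAddCommGroup E] [InnerProductSpace ℝ E]
    {Ω : Set E} (ho : IsOpen Ω) (hc : Convex ℝ Ω) {x : E} (hx : x ∈ frontier Ω) :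
    ∃ ν : E, ‖ν‖ = 1 ∧ ∀ p ∈ Ω, ∃ t : ℝ, p + t • ν ∉ Ω := by
  have hxΩ : x ∉ Ω := fun h => by
    rw [ho.frontier_eq] at hx
    exact hx.2 h
  obtain ⟨f, hf⟩ := geometric_hahn_banach_open_point hc ho hxΩ
  obtain ⟨q, hq⟩ : Ω.Nonempty := closure_nonempty_iff.1 ⟨x, hx.1⟩
  set v : E := x - q with hv
  have hfv : 0 < f v := by
    rw [hv, map_sub, sub_pos]
    exact hf q hq
  have hv0 : v ≠ 0 := fun h => by simp [h] at hfv
  have hn : 0 < ‖v‖ := norm_pos_iff.2 hv0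
  refine ⟨(‖v‖)⁻¹ • v, by rw [norm_smul, norm_inv, norm_norm, inv_mul_cancel₀ hn.ne'],
    fun p _ => ⟨‖v‖ * ((f x - f p) / f v), fun h => ?_⟩⟩
  have := hf _ h
  rw [smul_smul, mul_right_comm, mul_inv_cancel₀ hn.ne', one_mul, map_add, map_smul, smul_eq_mul,
    div_mul_cancel₀ _ hfv.ne'] at this
  linarith

/-- The part of an open convex set in a ball centred at a frontier point has volume at most
the diameter of the ball times the area of the frontier. -/
lemma volume_inter_ball_le_mul_hausdorffMeasure_frontier {n : ℕ}
    {Ω : Set (EuclideanSpace ℝ (Fin (n + 1)))} (ho : IsOpen Ω) (hc : Convex ℝ Ω)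
    {x : EuclideanSpace ℝ (Fin (n + 1))} (hx : x ∈ frontier Ω) (R : ℝ) :
    volume (Ω ∩ ball x R) ≤ ENNReal.ofReal (2 * R) * μH[(n : ℝ)] (frontier Ω) := by
  obtain ⟨ν, hν, hleave⟩ := exists_unit_direction_leaving ho hc hx
  obtain ⟨b, hb⟩ := Orthonormal.exists_orthonormalBasis_extension_of_card_eq (𝕜 := ℝ)
    (E := EuclideanSpace ℝ (Fin (n + 1))) (ι := Fin (n + 1)) (by simp) (v := fun _ => ν)
    (s := {0}) ⟨fun _ => hν, fun i j hij => (hij (Subsingleton.elim i j)).elim⟩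
  have hb0 : b 0 = ν := hb 0 rfl
  set e : (EuclideanSpace ℝ (Fin (n + 1))) → ℝ × (Fin n → ℝ) := fun y =>
    MeasurableEquiv.piFinSuccAbove (fun _ => ℝ) 0 (b.repr y).ofLp with he
  have hmp : MeasurePreserving e volume volume :=
    (volume_preserving_piFinSuccAbove (fun _ => ℝ) 0).comp
      ((PiLp.volume_preserving_ofLp (Fin (n + 1))).comp b.measurePreserving_repr)
  have he1 (y) : (e y).1 = b.repr y 0 := rfl
  have he2 (y) (i : Fin n) : (e y).2 i = b.repr y i.succ := rfl
  have hcoord (y z) (i : Fin (n + 1)) : dist (b.repr y i) (b.repr z i) ≤ dist y z := by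
    rw [← b.repr.dist_map y z, dist_eq_norm, dist_eq_norm]
    exact PiLp.norm_apply_le (b.repr y - b.repr z) i
  have hlip : LipschitzWith 1 fun y => (e y).2 := by
    refine LipschitzWith.of_dist_le_mul fun y z => ?_
    rw [NNReal.coe_one, one_mul, dist_pi_le_iff dist_nonneg]
    exact fun i => hcoord y z i.succ
  have hsub : Ω ∩ ball x R ⊆
      e ⁻¹' (ball (b.repr x 0) R ×ˢ ((fun y => (e y).2) '' frontier Ω)) := by
    rintro y ⟨hy, hyR⟩
    refine ⟨?_, ?_⟩
    · rw [mem_ball, he1]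
      exact (hcoord y x 0).trans_lt hyR
    · obtain ⟨t, ht⟩ := exists_add_smul_mem_frontier hy (hleave y hy)
      refine ⟨_, ht, ?_⟩
      funext i
      change (e (y + t • ν)).2 i = (e y).2 i
      rw [he2, he2, map_add, map_smul, ← hb0, b.repr_self]
      simp
  calc volume (Ω ∩ ball x R)
      ≤ volume (e ⁻¹' (ball (b.repr x 0) R ×ˢ ((fun y => (e y).2) '' frontier Ω))) :=
        measure_mono hsub
    _ ≤ Measure.map e volume (ball (b.repr x 0) R ×ˢ ((fun y => (e y).2) '' frontier Ω)) :=
        Measure.le_map_apply hmp.measurable.aemeasurable _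
    _ = ENNReal.ofReal (2 * R) * volume ((fun y => (e y).2) '' frontier Ω) := by
        rw [hmp.map_eq, Measure.volume_eq_prod, Measure.prod_prod, Real.volume_ball]
    _ ≤ ENNReal.ofReal (2 * R) * μH[(n : ℝ)] (frontier Ω) := by
        gcongr
        have h := hlip.hausdorffMeasure_image_le (d := (n : ℝ)) (by positivity) (frontier Ω)
        rw [ENNReal.coe_one, ENNReal.one_rpow, one_mul] at h
        rw [← hausdorffMeasure_pi_real, Fintype.card_fin]
        exact h

/-- Negative powers of the distance are integrable away from their pole. -/
lemma integrableOn_dist_rpow_neg_s2 {E : Type*} [NormedAddCommGroup E] [NormedSpace ℝ E]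
    [FiniteDimensional ℝ E] [MeasurableSpace E] [BorelSpace E] (μ : Measure E)
    [μ.IsAddHaarMeasure] (x : E) {p ε : ℝ} (hp : (Module.finrank ℝ E : ℝ) < p) (hε : 0 < ε) :
    IntegrableOn (fun y => dist y x ^ (-p)) {y | ε < dist y x} μ := by
  have hp0 : 0 < p := lt_of_le_of_lt (Nat.cast_nonneg _) hp
  have hS : MeasurableSet {y | ε < dist y x} :=
    measurableSet_lt measurable_const (by fun_prop)
  have h1 : Integrable (fun y : E => (1 + ε⁻¹) ^ p * (1 + ‖y - x‖) ^ (-p)) μ :=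
    ((integrable_one_add_norm (μ := μ) hp).comp_sub_right x).const_mul _
  refine Integrable.mono' h1.integrableOn (Measurable.aestronglyMeasurable (by fun_prop)) ?_
  filter_upwards [ae_restrict_mem hS] with y hy
  have hd : 0 < dist y x := hε.trans hy
  rw [Real.norm_of_nonneg (by positivity), ← dist_eq_norm, Real.rpow_neg hd.le,
    Real.rpow_neg (by positivity), ← div_eq_mul_inv, ← Real.div_rpow (by positivity)
    (by positivity), ← Real.inv_rpow hd.le]
  refine Real.rpow_le_rpow (by positivity) ?_ hp0.le
  rw [inv_eq_one_div, div_le_div_iff₀ hd (by positivity), one_mul, add_mul, one_mul, add_comm]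
  have : 1 ≤ ε⁻¹ * dist y x := by
    rw [inv_mul_eq_div, one_le_div hε]
    exact hy.le
  linarith

/-- The integrand of the fractional mean curvature. -/
noncomputable def fracMCIntegrand (p : ℝ) {E : Type*} [NormedAddCommGroup E] (Ω : Set E)
    (x y : E) : ℝ :=
  ((Ωᶜ.indicator (fun _ => (1:ℝ)) y) - (Ω.indicator (fun _ => (1:ℝ)) y)) * dist y x ^ (-p)

lemma fracMCIntegrand_of_mem {p : ℝ} {E : Type*} [NormedAddCommGroup E] {Ω : Set E} {x y : E}
    (hy : y ∈ Ω) : fracMCIntegrand p Ω x y = -dist y x ^ (-p) := by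
  simp [fracMCIntegrand, hy]

lemma fracMCIntegrand_of_notMem {p : ℝ} {E : Type*} [NormedAddCommGroup E] {Ω : Set E} {x y : E}
    (hy : y ∉ Ω) : fracMCIntegrand p Ω x y = dist y x ^ (-p) := by
  simp [fracMCIntegrand, hy]

lemma integrableOn_fracMCIntegrand {E : Type*} [NormedAddCommGroup E] [NormedSpace ℝ E]
    [FiniteDimensional ℝ E] [MeasurableSpace E] [BorelSpace E] (μ : Measure E)
    [μ.IsAddHaarMeasure] {Ω : Set E} (hΩ : MeasurableSet Ω) (x : E) {p ε : ℝ}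
    (hp : (Module.finrank ℝ E : ℝ) < p) (hε : 0 < ε) :
    IntegrableOn (fracMCIntegrand p Ω x) {y | ε < dist y x} μ := by
  refine Integrable.mono (integrableOn_dist_rpow_neg_s2 μ x hp hε) ?_ (.of_forall fun y => ?_)
  · refine Measurable.aestronglyMeasurable ?_
    unfold fracMCIntegrand
    exact ((measurable_const.indicator hΩ.compl).sub (measurable_const.indicator hΩ)).mul
      (by fun_prop)
  · by_cases hy : y ∈ Ω
    · rw [fracMCIntegrand_of_mem hy, norm_neg]
    · rw [fracMCIntegrand_of_notMem hy]

/-- Over sets symmetric about a frontier point of a convex set, the integral of the fractional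
mean curvature integrand is nonnegative. -/
lemma setIntegral_fracMCIntegrand_nonneg {E : Type*} [NormedAddCommGroup E] [NormedSpace ℝ E]
    [FiniteDimensional ℝ E] [MeasurableSpace E] [BorelSpace E] (μ : Measure E)
    [μ.IsAddHaarMeasure] {Ω : Set E} (ho : IsOpen Ω) (hc : Convex ℝ Ω) {x : E}
    (hx : x ∈ frontier Ω) {p : ℝ} {S : Set E} (hsymm : (fun y => x + x - y) ⁻¹' S = S)
    (hint : IntegrableOn (fracMCIntegrand p Ω x) S μ) :
    0 ≤ ∫ y in S, fracMCIntegrand p Ω x y ∂μ := by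
  have hxΩ : x ∉ Ω := fun h => by
    rw [ho.frontier_eq] at hx
    exact hx.2 h
  have hmp : MeasurePreserving (fun y => x + x - y) μ μ := μ.measurePreserving_sub_left (x + x)
  have hemb : MeasurableEmbedding (fun y => x + x - y) :=
    (MeasurableEquiv.subLeft (x + x)).measurableEmbedding
  have hrefl : ∫ y in S, fracMCIntegrand p Ω x (x + x - y) ∂μ =
      ∫ y in S, fracMCIntegrand p Ω x y ∂μ := by
    conv_lhs => rw [← hsymm]
    exact hmp.setIntegral_preimage_emb hemb _ S
  have hint' : IntegrableOn (fun y => fracMCIntegrand p Ω x (x + x - y)) S μ := by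
    rw [← hsymm]
    exact (hmp.integrableOn_comp_preimage hemb).2 hint
  have hsum : 0 ≤ ∫ y in S, (fracMCIntegrand p Ω x y + fracMCIntegrand p Ω x (x + x - y)) ∂μ := by
    refine integral_nonneg fun y => ?_
    have hd : dist (x + x - y) x = dist y x := by
      rw [dist_eq_norm, dist_eq_norm, ← norm_neg]
      congr 1
      abel
    have hpos : 0 ≤ dist y x ^ (-p) := by positivity
    change 0 ≤ fracMCIntegrand p Ω x y + fracMCIntegrand p Ω x (x + x - y)
    by_cases h1 : y ∈ Ω
    · have h2 : x + x - y ∉ Ω := fun h2 => hxΩ (by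
        have := hc h1 h2 (a := 1 / 2) (b := 1 / 2) (by norm_num) (by norm_num) (by norm_num)
        rw [← smul_add, add_sub_cancel, ← two_smul ℝ x, smul_smul] at this
        simpa using this)
      rw [fracMCIntegrand_of_mem h1, fracMCIntegrand_of_notMem h2, hd]
      simp
    · by_cases h2 : x + x - y ∈ Ω
      · rw [fracMCIntegrand_of_notMem h1, fracMCIntegrand_of_mem h2, hd]
        simp
      · rw [fracMCIntegrand_of_notMem h1, fracMCIntegrand_of_notMem h2, hd]
        positivity
  rw [integral_add hint hint', hrefl] at hsum
  linarith

/-- The truncated fractional mean curvature integral is bounded below by the contribution of the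
annulus of radii `ρ` and `2ρ`. -/
lemma le_setIntegral_fracMCIntegrand {n : ℕ} {Ω : Set (EuclideanSpace ℝ (Fin (n + 1)))}
    (ho : IsOpen Ω) (hc : Convex ℝ Ω) (hfin : μH[(n : ℝ)] (frontier Ω) < ⊤)
    {x : EuclideanSpace ℝ (Fin (n + 1))} (hx : x ∈ frontier Ω) {p ε ρ : ℝ}
    (hp : (n : ℝ) + 1 < p) (hε : 0 < ε) (hερ : ε < ρ) :
    (2 * ρ) ^ (-p) * (ρ ^ (n + 1) * volume.real (ball (0 : EuclideanSpace ℝ (Fin (n + 1))) 1))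
      - 2 * ρ ^ (-p) * (4 * ρ * (μH[(n : ℝ)] (frontier Ω)).toReal)
      ≤ ∫ y in {y | ε < dist y x}, fracMCIntegrand p Ω x y := by
  have hρ : 0 < ρ := hε.trans hερ
  have hp0 : 0 < p := by linarith [(Nat.cast_nonneg n : (0 : ℝ) ≤ n)]
  have hp' : (Module.finrank ℝ (EuclideanSpace ℝ (Fin (n + 1))) : ℝ) < p := by simpa using hp
  have hint := integrableOn_fracMCIntegrand volume ho.measurableSet x hp' hε
  set A : Set (EuclideanSpace ℝ (Fin (n + 1))) := ball x (2 * ρ) \ closedBall x ρ with hA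
  have hAm : MeasurableSet A := measurableSet_ball.diff measurableSet_closedBall
  have hAsub : A ⊆ {y | ε < dist y x} := fun y hy =>
    hερ.trans (not_le.1 fun h => hy.2 (mem_closedBall.2 h))
  have hAfin : volume A ≠ ⊤ := (measure_mono sdiff_subset).trans_lt measure_ball_lt_top |>.ne
  have hsplit := setIntegral_sdiff hAm hint hAsub
  have hdist (y : EuclideanSpace ℝ (Fin (n + 1))) : dist (x + x - y) x = dist y x := by
    rw [dist_eq_norm, dist_eq_norm, ← norm_neg]
    congr 1
    abel
  have hrest : 0 ≤ ∫ y in {y | ε < dist y x} \ A, fracMCIntegrand p Ω x y := by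
    refine setIntegral_fracMCIntegrand_nonneg volume ho hc hx ?_ (hint.mono_set sdiff_subset)
    ext y
    simp only [hA, mem_preimage, Set.mem_sdiff, mem_ofPred_eq, mem_ball, mem_closedBall, hdist]
  have hvolA : ρ ^ (n + 1) * volume.real (ball (0 : EuclideanSpace ℝ (Fin (n + 1))) 1) ≤
      volume.real A := by
    rw [hA, measureReal_sdiff (closedBall_subset_ball (by linarith)) measurableSet_closedBall
      measure_ball_lt_top.ne, ← Measure.addHaar_real_closedBall_eq_addHaar_real_ball _ x,
      Measure.addHaar_real_closedBall _ _ hρ.le,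
      Measure.addHaar_real_closedBall _ _ (by positivity), finrank_euclideanSpace_fin, ← sub_mul]
    refine mul_le_mul_of_nonneg_right ?_ measureReal_nonneg
    rw [mul_pow]
    have h2 : (2 : ℝ) ≤ 2 ^ (n + 1) := le_self_pow₀ (by norm_num) (by simp)
    nlinarith [pow_pos hρ (n + 1)]
  have hvolΩ : volume.real (A ∩ Ω) ≤ 4 * ρ * (μH[(n : ℝ)] (frontier Ω)).toReal := by
    have h := volume_inter_ball_le_mul_hausdorffMeasure_frontier ho hc hx (2 * ρ)
    have h' : volume (A ∩ Ω) ≤ ENNReal.ofReal (2 * (2 * ρ)) * μH[(n : ℝ)] (frontier Ω) :=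
      (measure_mono (t := Ω ∩ ball x (2 * ρ)) fun y hy => ⟨hy.2, hy.1.1⟩).trans h
    have := ENNReal.toReal_mono (ENNReal.mul_ne_top ENNReal.ofReal_ne_top hfin.ne) h'
    rw [ENNReal.toReal_mul, ENNReal.toReal_ofReal (by positivity)] at this
    calc _ ≤ _ := this
      _ = _ := by ring
  have hint_const (c : ℝ) : IntegrableOn (fun _ => c) A volume := integrableOn_const hAfin
  have hconst : ∫ y in A, ((2 * ρ) ^ (-p) - Ω.indicator (fun _ => 2 * ρ ^ (-p)) y) =
      (2 * ρ) ^ (-p) * volume.real A - 2 * ρ ^ (-p) * volume.real (A ∩ Ω) := by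
    rw [integral_sub (hint_const _) ((hint_const _).indicator ho.measurableSet),
      setIntegral_const, setIntegral_indicator ho.measurableSet,
      setIntegral_const, smul_eq_mul, smul_eq_mul]
    ring
  have hmono : ∫ y in A, ((2 * ρ) ^ (-p) - Ω.indicator (fun _ => 2 * ρ ^ (-p)) y) ≤
      ∫ y in A, fracMCIntegrand p Ω x y := by
    refine setIntegral_mono_on ((hint_const _).sub
      ((hint_const _).indicator ho.measurableSet)) (hint.mono_set hAsub) hAm
      fun y hy => ?_
    have hy1 : ρ ≤ dist y x := (not_le.1 fun h => hy.2 (mem_closedBall.2 h)).le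
    have hy2 : dist y x ≤ 2 * ρ := (mem_ball.1 hy.1).le
    have h1 : (2 * ρ) ^ (-p) ≤ dist y x ^ (-p) :=
      Real.rpow_le_rpow_of_nonpos (hρ.trans_le hy1) hy2 (by linarith)
    have h2 : dist y x ^ (-p) ≤ ρ ^ (-p) :=
      Real.rpow_le_rpow_of_nonpos hρ hy1 (by linarith)
    by_cases hyΩ : y ∈ Ω
    · rw [fracMCIntegrand_of_mem hyΩ, indicator_of_mem hyΩ]
      linarith
    · rw [fracMCIntegrand_of_notMem hyΩ, indicator_of_notMem hyΩ]
      linarith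
  have hq1 : (2 * ρ) ^ (-p) * (ρ ^ (n + 1) *
      volume.real (ball (0 : EuclideanSpace ℝ (Fin (n + 1))) 1)) ≤
      (2 * ρ) ^ (-p) * volume.real A := mul_le_mul_of_nonneg_left hvolA (by positivity)
  have hq2 : 2 * ρ ^ (-p) * volume.real (A ∩ Ω) ≤
      2 * ρ ^ (-p) * (4 * ρ * (μH[(n : ℝ)] (frontier Ω)).toReal) :=
    mul_le_mul_of_nonneg_left hvolΩ (by positivity)
  linarith

/-- Pointwise lower bound for the fractional mean curvature of a convex set by a power of the area
of its frontier. -/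
lemma exists_le_of_isFracMeanCurv {n : ℕ} (hn : 1 ≤ n) {α : ℝ} (hα : 0 < α) :
    ∃ c : ℝ, 0 < c ∧ ∀ Ω : Set (EuclideanSpace ℝ (Fin (n + 1))), IsOpen Ω → Convex ℝ Ω →
      μH[(n : ℝ)] (frontier Ω) < ⊤ → 0 < μH[(n : ℝ)] (frontier Ω) →
      ∀ x ∈ frontier Ω, ∀ h : ℝ, IsFracMeanCurv n α Ω x h →
        c * (μH[(n : ℝ)] (frontier Ω)).toReal ^ (-(α / n)) ≤ h := by
  set ω := volume.real (ball (0 : EuclideanSpace ℝ (Fin (n + 1))) 1) with hω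
  have hω0 : 0 < ω := ENNReal.toReal_pos (measure_ball_pos _ _ one_pos).ne'
    measure_ball_lt_top.ne
  set p : ℝ := (n : ℝ) + 1 + α with hp
  set a : ℝ := (2 : ℝ) ^ (-p) * ω with ha
  have ha0 : 0 < a := by positivity
  have hn0 : (0 : ℝ) < n := by exact_mod_cast hn
  refine ⟨α / 2 * (a / 2) * (16 / a) ^ (-(α / n)), by positivity, ?_⟩
  intro Ω ho hc hfin hpos x hx h hh
  set P := (μH[(n : ℝ)] (frontier Ω)).toReal with hP
  have hP0 : 0 < P := ENNReal.toReal_pos hpos.ne' hfin.ne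
  set ρ : ℝ := (16 / a * P) ^ (1 / (n : ℝ)) with hρ
  have hρ0 : 0 < ρ := by positivity
  have hρn : ρ ^ n = 16 / a * P := by
    rw [hρ, ← Real.rpow_natCast, ← Real.rpow_mul (by positivity), one_div_mul_cancel hn0.ne',
      Real.rpow_one]
  have hραn : ρ ^ (-α) = (16 / a) ^ (-(α / n)) * P ^ (-(α / n)) := by
    rw [hρ, ← Real.rpow_mul (by positivity), ← Real.mul_rpow (by positivity) hP0.le]
    congr 1
    ring
  have hρp : ρ ^ (-p) * ρ ^ (n + 1) = ρ ^ (-α) := by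
    rw [← Real.rpow_natCast, ← Real.rpow_add hρ0]
    congr 1
    push_cast
    ring
  have hPa : 8 * P = a / 2 * ρ ^ n := by
    rw [hρn]
    field_simp
    norm_num
  refine ge_of_tendsto hh ?_
  filter_upwards [Ioo_mem_nhdsGT hρ0] with ε hε
  have key := le_setIntegral_fracMCIntegrand ho hc hfin hx (p := p) (by linarith) hε.1 hε.2
  have hval : (2 * ρ) ^ (-p) * (ρ ^ (n + 1) * ω) - 2 * ρ ^ (-p) * (4 * ρ * P) =
      a / 2 * ρ ^ (-α) := by
    rw [Real.mul_rpow (by norm_num) hρ0.le]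
    calc (2 : ℝ) ^ (-p) * ρ ^ (-p) * (ρ ^ (n + 1) * ω) - 2 * ρ ^ (-p) * (4 * ρ * P)
        = a * (ρ ^ (-p) * ρ ^ (n + 1)) - ρ ^ (-p) * ρ * (8 * P) := by rw [ha]; ring
      _ = a / 2 * (ρ ^ (-p) * ρ ^ (n + 1)) := by rw [hPa]; ring
      _ = a / 2 * ρ ^ (-α) := by rw [hρp]
  rw [← hω, ← hP, hval] at key
  calc α / 2 * (a / 2) * (16 / a) ^ (-(α / n)) * P ^ (-(α / n))
      = α / 2 * (a / 2 * ρ ^ (-α)) := by rw [hραn]; ring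
    _ ≤ α / 2 * ∫ y in {y | ε < dist y x}, fracMCIntegrand p Ω x y := by gcongr
    _ = fracMCIntegral n α Ω x ε := rfl

/-- Fractional Aleksandrov-Fenchel type inequality on convex hypersurfaces. -/
theorem fractional_aleksandrov_fenchel_convex
    (n : ℕ) (hn : 1 ≤ n) (α s : ℝ)
    (hα : α ∈ Set.Ioo (0:ℝ) 1) (hs : s ∈ Set.Ioo (0:ℝ) 1) :
    ∃ C : ℝ, 0 < C ∧
      ∀ (Ω : Set (EuclideanSpace ℝ (Fin (n+1)))), IsOpen Ω → Convex ℝ Ω →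
        μH[(n:ℝ)] (frontier Ω) < ⊤ →
      ∀ (Hα : EuclideanSpace ℝ (Fin (n+1)) → ℝ), Measurable Hα →
        (∀ x ∈ frontier Ω, 0 ≤ Hα x) →
        (∀ᵐ x ∂(μH[(n:ℝ)].restrict (frontier Ω)), IsFracMeanCurv n α Ω x (Hα x)) →
        (μH[(n:ℝ)] (frontier Ω)) ^ (((n:ℝ) - s) / (n:ℝ))
          ≤ ENNReal.ofReal C *
            ∫⁻ x in frontier Ω, ENNReal.ofReal (Hα x ^ (s / α)) ∂μH[(n:ℝ)] := by
  obtain ⟨hα0, -⟩ := hα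
  obtain ⟨hs0, hs1⟩ := hs
  have hn0 : (0 : ℝ) < n := by exact_mod_cast hn
  have hn1 : (1 : ℝ) ≤ n := by exact_mod_cast hn
  obtain ⟨c, hc0, hc⟩ := exists_le_of_isFracMeanCurv hn hα0
  refine ⟨(c ^ (s / α))⁻¹, by positivity, ?_⟩
  intro Ω ho hconv hfin H _ _ hH
  rcases eq_or_ne (μH[(n : ℝ)] (frontier Ω)) 0 with h0 | h0
  · rw [h0, ENNReal.zero_rpow_of_pos (div_pos (by linarith) hn0)]
    exact zero_le
  set P := (μH[(n : ℝ)] (frontier Ω)).toReal with hP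
  have hP0 : 0 < P := ENNReal.toReal_pos h0 hfin.ne
  have hPe : μH[(n : ℝ)] (frontier Ω) = ENNReal.ofReal P := (ENNReal.ofReal_toReal hfin.ne).symm
  have hlow : ENNReal.ofReal (c ^ (s / α) * P ^ (-(s / n))) * μH[(n : ℝ)] (frontier Ω) ≤
      ∫⁻ x in frontier Ω, ENNReal.ofReal (H x ^ (s / α)) ∂μH[(n : ℝ)] := by
    rw [← setLIntegral_const]
    refine lintegral_mono_ae ?_
    filter_upwards [hH, ae_restrict_mem isClosed_frontier.measurableSet] with x hx hxf
    have hle := hc Ω ho hconv hfin (pos_iff_ne_zero.2 h0) x hxf _ hx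
    refine ENNReal.ofReal_le_ofReal ?_
    calc c ^ (s / α) * P ^ (-(s / n)) = (c * P ^ (-(α / n))) ^ (s / α) := by
          rw [Real.mul_rpow hc0.le (by positivity), ← Real.rpow_mul hP0.le]
          congr 2
          field_simp
      _ ≤ H x ^ (s / α) := Real.rpow_le_rpow (by positivity) hle (by positivity)
  refine le_trans (le_of_eq ?_) (mul_le_mul_right hlow _)
  rw [hPe, ENNReal.ofReal_rpow_of_pos hP0, ← ENNReal.ofReal_mul (by positivity),
    ← ENNReal.ofReal_mul (by positivity)]
  congr 1
  rw [mul_assoc, inv_mul_cancel_left₀ (by positivity), ← Real.rpow_add_one hP0.ne']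
  congr 1
  field_simp
  ring
end

section
/- Let n ≥ 1 be an integer. There exists a constant C_n ≥ 1, depending only on n, such that for every open convex set Ω ⊂ ℝ^{n+1}, every x ∈ ∂Ω, and every R > 0, one has μH[n](Ω ∩ ∂B_R(x)) ≤ (C_n / R) · μH[n](∂Ω ∩ B_R(x))^{(n+1)/n}, where ∂B_R(x) := {y ∈ ℝ^{n+1} : |y − x| = R}. -/
open MeasureTheory Set Filter Metric
open scoped ENNReal NNReal

theorem IsPreconnected.inter_frontier_nonempty {X : Type*} [TopologicalSpace X] {s t : Set X}
    (hs : IsPreconnected s) (h₁ : (s ∩ t).Nonempty) (h₂ : (s ∩ tᶜ).Nonempty) :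
    (s ∩ frontier t).Nonempty := by
  by_contra h
  rw [not_nonempty_iff_eq_empty] at h
  have hcover : s ⊆ interior t ∪ interior tᶜ := by
    intro x hx
    by_contra hxt
    simp only [mem_union, interior_compl, mem_compl_iff, not_or, not_not] at hxt
    exact (h ▸ (⟨hx, hxt.2, hxt.1⟩ : x ∈ s ∩ frontier t) : x ∈ (∅ : Set X))
  have ha : (s ∩ interior t).Nonempty := by
    obtain ⟨x, hx, hxt⟩ := h₁
    rcases hcover hx with h' | h'
    · exact ⟨x, hx, h'⟩
    · exact absurd hxt (interior_subset h')
  have hb : (s ∩ interior tᶜ).Nonempty := by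
    obtain ⟨x, hx, hxt⟩ := h₂
    rcases hcover hx with h' | h'
    · exact absurd (interior_subset h') hxt
    · exact ⟨x, hx, h'⟩
  obtain ⟨x, -, hx, hx'⟩ := hs _ _ isOpen_interior isOpen_interior hcover ha hb
  exact (interior_subset hx') (interior_subset hx)

section
variable {E : Type*} [NormedAddCommGroup E] [InnerProductSpace ℝ E]

theorem norm_inv_norm_smul_sub_le {r : ℝ} (hr : 0 < r) {v w : E} (hv : r ≤ ‖v‖) (hw : r ≤ ‖w‖) :
    ‖‖v‖⁻¹ • v - ‖w‖⁻¹ • w‖ ≤ 2 / r * ‖v - w‖ := by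
  have hv0 : 0 < ‖v‖ := hr.trans_le hv
  have hw0 : 0 < ‖w‖ := hr.trans_le hw
  have key : ‖v‖⁻¹ • v - ‖w‖⁻¹ • w = ‖v‖⁻¹ • (v - w) + (‖v‖⁻¹ - ‖w‖⁻¹) • w := by
    rw [smul_sub, sub_smul]; abel
  have h2 : ‖(‖v‖⁻¹ - ‖w‖⁻¹) • w‖ = ‖v‖⁻¹ * |‖w‖ - ‖v‖| := by
    rw [norm_smul, Real.norm_eq_abs, inv_sub_inv hv0.ne' hw0.ne', abs_div, abs_of_pos (mul_pos hv0 hw0)]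
    field_simp
  have h3 : |‖w‖ - ‖v‖| ≤ ‖v - w‖ := by
    rw [norm_sub_rev]; exact abs_norm_sub_norm_le w v
  have h4 : ‖v‖⁻¹ ≤ r⁻¹ := inv_anti₀ hr hv
  rw [key]
  calc _ ≤ ‖‖v‖⁻¹ • (v - w)‖ + ‖(‖v‖⁻¹ - ‖w‖⁻¹) • w‖ := norm_add_le _ _
    _ = ‖v‖⁻¹ * ‖v - w‖ + ‖v‖⁻¹ * |‖w‖ - ‖v‖| := by
      rw [h2, norm_smul, norm_inv, norm_norm]
    _ ≤ r⁻¹ * ‖v - w‖ + r⁻¹ * ‖v - w‖ := by gcongr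
    _ = 2 / r * ‖v - w‖ := by ring

theorem norm_inner_smul_sub_le {e u v : E} (he : ‖e‖ = 1) (hu : ‖u‖ = 1) (hv : ‖v‖ = 1) :
    ‖inner ℝ e u • u - inner ℝ e v • v‖ ≤ 2 * ‖u - v‖ := by
  have key : inner ℝ e u • u - inner ℝ e v • v
      = inner ℝ e u • (u - v) + inner ℝ e (u - v) • v := by
    rw [smul_sub, inner_sub_right, sub_smul]; abel
  have h1 : |inner ℝ e u| ≤ 1 := by simpa [he, hu] using abs_real_inner_le_norm e u
  have h2 : |inner ℝ e (u - v)| ≤ ‖u - v‖ := by simpa [he] using abs_real_inner_le_norm e (u - v)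
  rw [key]
  calc _ ≤ _ := norm_add_le _ _
    _ = |inner ℝ e u| * ‖u - v‖ + |inner ℝ e (u - v)| := by
      rw [norm_smul, norm_smul, hv, Real.norm_eq_abs, Real.norm_eq_abs, mul_one]
    _ ≤ 2 * ‖u - v‖ := by nlinarith [norm_nonneg (u - v)]

/-- Projection from the point `R • e` of the sphere of radius `R` centred at the origin back onto
that sphere. -/
noncomputable def stereoBack (e : E) (R : ℝ) (z : E) : E :=
  R • e - (2 * R) • (inner ℝ e (‖z - R • e‖⁻¹ • (z - R • e)) • (‖z - R • e‖⁻¹ • (z - R • e)))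

theorem lipschitzOnWith_stereoBack {e : E} {R : ℝ} (he : ‖e‖ = 1) (hR : 0 < R) :
    LipschitzOnWith 8 (stereoBack e R) {z | R ≤ ‖z - R • e‖} := by
  refine LipschitzOnWith.of_dist_le_mul fun z hz w hw => ?_
  simp only [mem_ofPred_eq] at hz hw
  have hu : ∀ {v : E}, R ≤ ‖v‖ → ‖‖v‖⁻¹ • v‖ = 1 := fun {v} hv => by
    have : ‖v‖ ≠ 0 := (hR.trans_le hv).ne'
    rw [norm_smul, norm_inv, norm_norm, inv_mul_cancel₀ this]
  rw [dist_eq_norm, dist_eq_norm, stereoBack, stereoBack, sub_sub_sub_cancel_left, ← smul_sub,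
    norm_smul, Real.norm_of_nonneg (by positivity)]
  have h1 := norm_inner_smul_sub_le he (hu hw) (hu hz)
  have h2 := norm_inv_norm_smul_sub_le hR hw hz
  rw [sub_sub_sub_cancel_right, norm_sub_rev w z] at h2
  calc _ ≤ 2 * R * (2 * (2 / R * ‖z - w‖)) := by gcongr; exact h1.trans (by gcongr)
    _ = (8 : ℝ) * ‖z - w‖ := by field_simp; norm_num [mul_comm]

theorem stereoBack_lineMap {e y : E} {R s : ℝ} (he : ‖e‖ = 1) (hy : ‖y‖ = R)
    (hey : inner ℝ e y < 0) (hR : 0 < R) (hs : 0 < s) :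
    stereoBack e R (R • e + s • (y - R • e)) = y := by
  set v := y - R • e with hv
  have hev : inner ℝ e v = inner ℝ e y - R := by
    rw [hv, inner_sub_right, inner_smul_right, real_inner_self_eq_norm_sq, he]; ring
  have hvv : ‖v‖ ^ 2 = - (2 * R) * inner ℝ e v := by
    rw [hev, hv, norm_sub_sq_real, norm_smul, he, hy, inner_smul_right, real_inner_comm,
      Real.norm_of_nonneg hR.le]; ring
  have hv0 : ‖v‖ ≠ 0 := by
    intro h; rw [h] at hvv; nlinarith
  have hsv : ‖s • v‖⁻¹ • s • v = ‖v‖⁻¹ • v := by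
    rw [norm_smul, Real.norm_of_nonneg hs.le, smul_smul]; congr 1; field_simp
  rw [stereoBack, add_sub_cancel_left, hsv, inner_smul_right, smul_smul, smul_smul]
  have : 2 * R * (‖v‖⁻¹ * inner ℝ e v) * ‖v‖⁻¹ = -1 := by
    field_simp; linarith
  rw [this, hv]; simp

theorem exists_unit_inner_neg [CompleteSpace E] {Ω : Set E} (hΩ : IsOpen Ω) (hc : Convex ℝ Ω)
    (hne : Ω.Nonempty) (h0 : (0 : E) ∉ Ω) : ∃ e : E, ‖e‖ = 1 ∧ ∀ a ∈ Ω, inner ℝ e a < 0 := by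
  obtain ⟨f, hf⟩ := geometric_hahn_banach_open_point hc hΩ h0
  set g := (InnerProductSpace.toDual ℝ E).symm f with hg
  have hgf : ∀ a, inner ℝ g a = f a := fun a => InnerProductSpace.toDual_symm_apply
  have hg0 : g ≠ 0 := by
    rintro h
    obtain ⟨a, ha⟩ := hne
    have := hf a ha
    rw [← hgf, h] at this
    simp at this
  refine ⟨‖g‖⁻¹ • g, by simp [norm_smul, hg0], fun a ha => ?_⟩
  have := hf a ha
  rw [map_zero] at this
  rw [real_inner_smul_left, hgf]
  exact mul_neg_of_pos_of_neg (by positivity) this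

theorem hausdorffMeasure_inter_sphere_le [CompleteSpace E] [MeasurableSpace E] [BorelSpace E]
    {Ω : Set E} (hΩ : IsOpen Ω) (hc : Convex ℝ Ω) (h0 : (0 : E) ∉ Ω) {R : ℝ} (hR : 0 < R)
    {d : ℝ} (hd : 0 ≤ d) :
    μH[d] (Ω ∩ sphere 0 R) ≤ 8 ^ d * μH[d] (frontier Ω ∩ ball 0 R) := by
  rcases Ω.eq_empty_or_nonempty with rfl | hne
  · simp
  obtain ⟨e, he, hneg⟩ := exists_unit_inner_neg hΩ hc hne h0
  have hcl : ∀ a ∈ closure Ω, inner ℝ e a ≤ 0 := fun a ha =>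
    closure_minimal (t := {a | inner ℝ e a ≤ 0}) (fun a ha => (hneg a ha).le)
      (isClosed_le (by fun_prop) continuous_const) ha
  have hdist : ∀ z, inner ℝ e z ≤ 0 → R ≤ ‖z - R • e‖ := fun z hz => by
    have h1 : inner ℝ e (R • e - z) = R - inner ℝ e z := by
      rw [inner_sub_right, inner_smul_right, real_inner_self_eq_norm_sq, he]; ring
    have h2 := real_inner_le_norm e (R • e - z)
    rw [he, one_mul, norm_sub_rev] at h2
    linarith
  have hsub : Ω ∩ sphere 0 R ⊆ stereoBack e R '' (frontier Ω ∩ ball 0 R) := by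
    rintro y ⟨hy, hyR⟩
    rw [mem_sphere_zero_iff_norm] at hyR
    have hp : R • e ∉ closure Ω := fun h => by
      have := hcl _ h
      rw [inner_smul_right, real_inner_self_eq_norm_sq, he] at this
      linarith
    obtain ⟨z, hz, hzf⟩ := ((convex_segment (𝕜 := ℝ) (R • e) y).isPreconnected).inter_frontier_nonempty
      ⟨y, right_mem_segment _ _ _, hy⟩ ⟨R • e, left_mem_segment _ _ _, fun h => hp (subset_closure h)⟩
    rw [segment_eq_image'] at hz
    obtain ⟨s, ⟨hs0, hs1⟩, rfl⟩ := hz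
    have hs0 : 0 < s := by
      refine hs0.lt_of_ne' ?_
      rintro rfl
      exact hp (by simpa using hzf.1)
    have hs1 : s < 1 := by
      refine hs1.lt_of_ne ?_
      rintro rfl
      rw [hΩ.frontier_eq] at hzf
      exact hzf.2 (by simpa using hy)
    refine ⟨_, ⟨hzf, ?_⟩, stereoBack_lineMap he hyR (hneg y hy) hR hs0⟩
    rw [mem_ball_zero_iff]
    refine lt_of_pow_lt_pow_left₀ 2 hR.le ?_
    have h1 : R • e + s • (y - R • e) = (R * (1 - s)) • e + s • y := by module
    have h2 := hneg y hy
    beta_reduce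
    rw [h1, norm_add_sq_real, norm_smul, norm_smul, he, hyR, inner_smul_left, inner_smul_right,
      Real.norm_of_nonneg (by nlinarith), Real.norm_of_nonneg hs0.le]
    simp only [RCLike.conj_to_real]
    have h3 : 0 < (R * (1 - s)) * s := by have := sub_pos.2 hs1; positivity
    have h4 : (R * (1 - s)) * s * inner ℝ e y < 0 := mul_neg_of_pos_of_neg h3 h2
    nlinarith
  calc _ ≤ μH[d] (stereoBack e R '' (frontier Ω ∩ ball 0 R)) := measure_mono hsub
    _ ≤ _ := by
      have := (lipschitzOnWith_stereoBack he hR).mono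
        (fun z (hz : z ∈ frontier Ω ∩ ball 0 R) => hdist z (hcl z hz.1.1))
      simpa using this.hausdorffMeasure_image_le hd
end

theorem lintegral_insertNth {n : ℕ} (i : Fin (n + 1)) {f : (Fin (n + 1) → ℝ) → ℝ≥0∞}
    (hf : Measurable f) :
    ∫⁻ x, f x = ∫⁻ t : ℝ, ∫⁻ w : Fin n → ℝ, f (i.insertNth t w) := by
  have h := (volume_preserving_piFinSuccAbove (fun _ : Fin (n + 1) => ℝ) i).symm
  rw [← h.lintegral_comp hf, Measure.volume_eq_prod]
  exact lintegral_prod _ (hf.comp (MeasurableEquiv.measurable _)).aemeasurable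

theorem volume_le_sum_removeNth {n : ℕ} (hn : 1 ≤ n) {U : Set (Fin (n + 1) → ℝ)} (hU : IsOpen U) :
    volume U ≤ (∑ i : Fin (n + 1), volume (i.removeNth '' U : Set (Fin n → ℝ)))
      ^ (((n : ℝ) + 1) / n) := by
  classical
  have hn0 : (0 : ℝ) < n := by exact_mod_cast hn
  have hA : ∀ i : Fin (n + 1), MeasurableSet (i.removeNth '' U : Set (Fin n → ℝ)) := fun i => by
    have h : (i.removeNth '' U : Set (Fin n → ℝ)) = ⋃ t : ℝ, {w | i.insertNth t w ∈ U} := by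
      ext w
      simp only [mem_image, mem_iUnion, mem_ofPred_eq]
      constructor
      · rintro ⟨x, hx, rfl⟩
        exact ⟨x i, by simpa using hx⟩
      · rintro ⟨t, ht⟩
        exact ⟨_, ht, by simp⟩
    rw [h]
    exact (isOpen_iUnion fun t => hU.preimage (by fun_prop)).measurableSet
  set g : Fin (n + 1) → (Fin (n + 1) → ℝ) → ℝ≥0∞ := fun i x =>
    (i.removeNth '' U : Set (Fin n → ℝ)).indicator 1 (i.removeNth x) *
      (Icc (0 : ℝ) 1).indicator 1 (x i) with hg
  have hgm : ∀ i, Measurable (g i) := fun i =>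
    ((measurable_one.indicator (hA i)).comp
      (measurable_pi_iff.2 fun j => measurable_pi_apply (i.succAbove j))).mul
      ((measurable_one.indicator measurableSet_Icc).comp (measurable_pi_apply i))
  have hgint : ∀ i, ∫⁻ x, g i x = volume (i.removeNth '' U : Set (Fin n → ℝ)) := fun i => by
    rw [lintegral_insertNth i (hgm i)]
    simp only [hg, Fin.removeNth_insertNth, Fin.insertNth_apply_same]
    simp_rw [lintegral_mul_const _ (measurable_one.indicator (hA i)), lintegral_indicator_one (hA i)]
    rw [lintegral_const_mul _ (measurable_one.indicator measurableSet_Icc),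
      lintegral_indicator_one measurableSet_Icc]
    simp
  have hp : Real.HolderConjugate (Fintype.card (Fin (n + 1))) (((n : ℝ) + 1) / n) := by
    rw [Fintype.card_fin, Real.holderConjugate_iff]
    push_cast
    refine ⟨by linarith, ?_⟩
    field_simp
    ring
  have key := lintegral_prod_lintegral_pow_le (fun _ : Fin (n + 1) => (volume : Measure ℝ)) hp
    (f := fun x => ∑ i, g i x) (Finset.measurable_sum _ fun i _ => hgm i)
  have hsum : ∫⁻ x, ∑ i, g i x = ∑ i : Fin (n + 1), volume (i.removeNth '' U : Set (Fin n → ℝ)) := by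
    rw [lintegral_finsetSum _ fun i _ => hgm i]
    simp_rw [hgint]
  rw [← volume_pi, hsum] at key
  refine le_trans ?_ key
  rw [← lintegral_indicator_one hU.measurableSet]
  refine lintegral_mono fun x => ?_
  refine indicator_apply_le' (fun hx => ?_) fun _ => zero_le
  refine Finset.one_le_prod' fun i _ => ?_
  refine ENNReal.one_le_rpow ?_ ?_
  · calc (1 : ℝ≥0∞) = ∫⁻ t : ℝ, (Icc (0 : ℝ) 1).indicator 1 t := by
          rw [lintegral_indicator_one measurableSet_Icc]; simp
      _ ≤ _ := by
          refine lintegral_mono fun t => ?_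
          refine le_trans ?_ (Finset.single_le_sum (fun _ _ => zero_le) (Finset.mem_univ i))
          simp only [hg, Function.update_self, Fin.removeNth_update]
          rw [indicator_of_mem (mem_image_of_mem _ hx)]
          simp
  · rw [Fintype.card_fin, Nat.cast_succ, add_sub_cancel_right]; positivity

theorem volume_removeNth_image_le {n : ℕ} (i : Fin (n + 1)) (s : Set (EuclideanSpace ℝ (Fin (n + 1)))) :
    volume ((fun y : EuclideanSpace ℝ (Fin (n + 1)) => (i.removeNth y.ofLp : Fin n → ℝ)) '' s)
      ≤ μH[(n : ℝ)] s := by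
  have h1 : LipschitzWith 1
      (fun y : EuclideanSpace ℝ (Fin (n + 1)) => (i.removeNth y.ofLp : Fin n → ℝ)) := by
    refine LipschitzWith.of_dist_le_mul fun y z => ?_
    rw [NNReal.coe_one, one_mul]
    refine (dist_pi_le_iff dist_nonneg).2 fun j => ?_
    rw [dist_eq_norm, dist_eq_norm]
    exact PiLp.norm_apply_le (y - z) _
  have h2 := h1.hausdorffMeasure_image_le (Nat.cast_nonneg n) s
  have h3 := hausdorffMeasure_pi_real (ι := Fin n)
  rw [Fintype.card_fin] at h3
  rw [← h3]
  simpa using h2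

theorem volume_le_hausdorffMeasure_frontier {n : ℕ} (hn : 1 ≤ n)
    {Ω : Set (EuclideanSpace ℝ (Fin (n + 1)))} (hΩ : IsOpen Ω) {r R : ℝ} (hr : 0 < r) (hrR : r < R) :
    volume {v : Fin (n + 1) → ℝ | WithLp.toLp 2 v ∈ Ω ∩ ball 0 r} ≤
      (((n : ℝ≥0∞) + 1) * (μH[(n : ℝ)] (frontier Ω ∩ ball 0 R) + μH[(n : ℝ)] (Ω ∩ sphere 0 r)))
        ^ (((n : ℝ) + 1) / n) := by
  have hU : IsOpen {v : Fin (n + 1) → ℝ | WithLp.toLp 2 v ∈ Ω ∩ ball 0 r} :=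
    (hΩ.inter isOpen_ball).preimage (PiLp.continuous_toLp 2 _)
  refine (volume_le_sum_removeNth hn hU).trans ?_
  refine ENNReal.rpow_le_rpow ?_ (by positivity)
  have key : ∀ i : Fin (n + 1),
      volume (i.removeNth '' {v : Fin (n + 1) → ℝ | WithLp.toLp 2 v ∈ Ω ∩ ball 0 r} :
        Set (Fin n → ℝ)) ≤
      μH[(n : ℝ)] (frontier Ω ∩ ball 0 R) + μH[(n : ℝ)] (Ω ∩ sphere 0 r) := fun i => by
    refine le_trans (measure_mono ?_) ((volume_removeNth_image_le i
      ((frontier Ω ∩ ball 0 R) ∪ (Ω ∩ sphere 0 r))).trans (measure_union_le _ _))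
    rintro _ ⟨v, hv, rfl⟩
    set y : EuclideanSpace ℝ (Fin (n + 1)) := WithLp.toLp 2 v with hy
    set e : EuclideanSpace ℝ (Fin (n + 1)) := EuclideanSpace.single i (2 * r) with he
    have hyr : ‖y‖ < r := mem_ball_zero_iff.1 hv.2
    have hout : y + e ∈ (Ω ∩ ball 0 r)ᶜ := fun h => by
      have h1 : ‖y + e‖ < r := mem_ball_zero_iff.1 h.2
      have h2 : ‖e‖ = 2 * r := by
        rw [he, PiLp.norm_single, Real.norm_of_nonneg (by positivity)]
      have h3 := norm_sub_le (y + e) y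
      rw [add_sub_cancel_left] at h3
      linarith
    obtain ⟨z, hz, hzf⟩ := ((convex_segment (𝕜 := ℝ) y (y + e)).isPreconnected).inter_frontier_nonempty
      (t := Ω ∩ ball 0 r) ⟨y, left_mem_segment _ _ _, hv⟩ ⟨_, right_mem_segment _ _ _, hout⟩
    rw [segment_eq_image'] at hz
    obtain ⟨s, -, rfl⟩ := hz
    simp only [add_sub_cancel_left] at hzf
    refine ⟨y + s • e, ?_, ?_⟩
    · rw [(hΩ.inter isOpen_ball).frontier_eq] at hzf
      obtain ⟨hc, hno⟩ := hzf
      have hcΩ := closure_mono inter_subset_left hc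
      have hcr : ‖y + s • e‖ ≤ r := mem_closedBall_zero_iff.1
        (closure_ball_subset_closedBall (closure_mono inter_subset_right hc))
      by_cases hm : y + s • e ∈ Ω
      · right
        refine ⟨hm, mem_sphere_zero_iff_norm.2 (le_antisymm hcr ?_)⟩
        by_contra! hlt
        exact hno ⟨hm, mem_ball_zero_iff.2 hlt⟩
      · left
        exact ⟨hΩ.frontier_eq ▸ ⟨hcΩ, hm⟩, mem_ball_zero_iff.2 (hcr.trans_lt hrR)⟩
    · funext j
      simp [Fin.removeNth, hy, he]
  refine (Finset.sum_le_sum fun i _ => key i).trans ?_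
  simp [mul_add]

theorem EuclideanSpace.norm_le_of_forall_abs_le {n : ℕ} {v : EuclideanSpace ℝ (Fin (n + 1))} {c : ℝ}
    (hc : 0 ≤ c) (h : ∀ j, |v j| ≤ c) : ‖v‖ ≤ (n + 1) * c := by
  refine le_of_sq_le_sq ?_ (by positivity)
  rw [EuclideanSpace.norm_sq_eq]
  calc ∑ j, ‖v j‖ ^ 2 ≤ ∑ _j : Fin (n + 1), c ^ 2 :=
        Finset.sum_le_sum fun j _ => by have := h j; rw [Real.norm_eq_abs]; gcongr
    _ = (n + 1) * c ^ 2 := by simp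
    _ ≤ ((n + 1) * c) ^ 2 := by
      rw [mul_pow]
      gcongr
      nlinarith [(Nat.cast_nonneg n : (0 : ℝ) ≤ n)]

theorem lipschitzWith_sphere_chart {n : ℕ} (i : Fin (n + 1)) {σ : ℝ} (hσ : |σ| = 1) {R : ℝ}
    (hR : 0 < R) :
    LipschitzWith (Real.toNNReal (2 * R * (n + 1))) (fun w : Fin n → ℝ =>
      R • ‖(WithLp.toLp 2 (i.insertNth σ w) : EuclideanSpace ℝ (Fin (n + 1)))‖⁻¹ •
        (WithLp.toLp 2 (i.insertNth σ w) : EuclideanSpace ℝ (Fin (n + 1)))) := by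
  refine LipschitzWith.of_dist_le_mul fun w w' => ?_
  rw [dist_eq_norm, ← smul_sub, norm_smul, Real.norm_of_nonneg hR.le,
    Real.coe_toNNReal _ (by positivity)]
  have h1 : ∀ w : Fin n → ℝ,
      1 ≤ ‖(WithLp.toLp 2 (i.insertNth σ w) : EuclideanSpace ℝ (Fin (n + 1)))‖ := fun w => by
    have := PiLp.norm_apply_le (WithLp.toLp 2 (i.insertNth σ w) : EuclideanSpace ℝ (Fin (n + 1))) i
    simpa [hσ] using this
  have h2 := norm_inv_norm_smul_sub_le one_pos (h1 w) (h1 w')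
  have h3 : ‖(WithLp.toLp 2 (i.insertNth σ w) : EuclideanSpace ℝ (Fin (n + 1))) -
      WithLp.toLp 2 (i.insertNth σ w')‖ ≤ (n + 1) * dist w w' := by
    refine EuclideanSpace.norm_le_of_forall_abs_le dist_nonneg ?_
    refine i.forall_iff_succAbove.2 ⟨by simp, fun j => ?_⟩
    simpa [Real.dist_eq] using dist_le_pi_dist w w' j
  calc _ ≤ R * (2 / 1 * ((n + 1) * dist w w')) := by gcongr; exact h2.trans (by gcongr)
    _ = _ := by ring

open scoped Pointwise in
theorem volume_cone_section_le {n : ℕ} {U : Set (Fin (n + 1) → ℝ)} (hU : IsOpen U)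
    (i : Fin (n + 1)) {σ : ℝ} (hσ : σ = 1 ∨ σ = -1) {D : Set (Fin n → ℝ)} {h : ℝ} (hh : 0 < h)
    (hD : ∀ w ∈ D, ∀ t ∈ Ioo (h / 2) h, t • (i.insertNth σ w : Fin (n + 1) → ℝ) ∈ U) :
    volume D ≤ ENNReal.ofReal ((2 / h) ^ (n + 1)) * volume U := by
  set I : Set ℝ := {τ | σ * τ ∈ Ioo (h / 2) h} with hI
  have hIvol : volume I = ENNReal.ofReal (h / 2) := by
    rcases hσ with rfl | rfl
    · have : I = Ioo (h / 2) h := by ext; simp [hI]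
      rw [this, Real.volume_Ioo]; congr 1; ring
    · have : I = Ioo (-h) (-(h / 2)) := by
        ext; simp only [hI, mem_ofPred_eq, mem_Ioo]; constructor <;> rintro ⟨h1, h2⟩ <;> constructor <;> linarith
      rw [this, Real.volume_Ioo]; congr 1; ring
  have hImeas : MeasurableSet I := measurableSet_Ioo.preimage (measurable_const_mul σ)
  have hσσ : σ * σ = 1 := by rcases hσ with rfl | rfl <;> norm_num
  have hslice : ∀ τ ∈ I, ENNReal.ofReal ((h / 2) ^ n) * volume D ≤
      volume {w : Fin n → ℝ | (i.insertNth τ w : Fin (n + 1) → ℝ) ∈ U} := fun τ hτ => by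
    have hτ' : σ * τ ∈ Ioo (h / 2) h := hτ
    calc _ ≤ volume ((σ * τ) • D) := by
          rw [Measure.addHaar_smul, Module.finrank_fin_fun, abs_of_nonneg (pow_nonneg (by linarith [hτ'.1]) n)]
          gcongr
          exact hτ'.1.le
      _ ≤ _ := by
          refine measure_mono ?_
          rintro _ ⟨w, hw, rfl⟩
          have heq : (i.insertNth τ ((σ * τ) • w) : Fin (n + 1) → ℝ) =
              (σ * τ) • (i.insertNth σ w : Fin (n + 1) → ℝ) := by
            refine funext (i.forall_iff_succAbove.2 ⟨?_, fun j => by simp⟩)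
            simp only [Fin.insertNth_apply_same, Pi.smul_apply, smul_eq_mul]
            linear_combination (-τ) * hσσ
          change (i.insertNth τ ((σ * τ) • w) : Fin (n + 1) → ℝ) ∈ U
          exact heq ▸ hD w hw _ hτ'
  have hvolU : volume U = ∫⁻ τ : ℝ, volume {w : Fin n → ℝ | (i.insertNth τ w : Fin (n + 1) → ℝ) ∈ U} := by
    rw [← lintegral_indicator_one hU.measurableSet,
      lintegral_insertNth i (measurable_one.indicator hU.measurableSet)]
    refine lintegral_congr fun τ => ?_
    have : IsOpen {w : Fin n → ℝ | (i.insertNth τ w : Fin (n + 1) → ℝ) ∈ U} :=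
      hU.preimage (by fun_prop)
    rw [← lintegral_indicator_one this.measurableSet]
    rfl
  have hmain : ENNReal.ofReal ((h / 2) ^ n) * volume D * ENNReal.ofReal (h / 2) ≤ volume U := by
    rw [hvolU, ← hIvol, ← setLIntegral_const]
    exact (setLIntegral_mono' hImeas hslice).trans (setLIntegral_le_lintegral _ _)
  calc volume D = ENNReal.ofReal ((2 / h) ^ (n + 1)) *
        (ENNReal.ofReal ((h / 2) ^ n) * volume D * ENNReal.ofReal (h / 2)) := by
        rw [mul_right_comm, ← ENNReal.ofReal_mul (by positivity), ← mul_assoc,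
          ← ENNReal.ofReal_mul (by positivity), ← pow_succ, ← mul_pow]
        have : 2 / h * (h / 2) = 1 := by field_simp
        simp [this]
    _ ≤ _ := by gcongr

theorem hausdorffMeasure_sphere_patch_le {n : ℕ} {Ω : Set (EuclideanSpace ℝ (Fin (n + 1)))}
    (hΩ : IsOpen Ω) (hc : Convex ℝ Ω) (h0 : 0 ∈ closure Ω) {R : ℝ} (hR : 0 < R) (i : Fin (n + 1))
    {σ : ℝ} (hσ : σ = 1 ∨ σ = -1) :
    μH[(n : ℝ)] {y ∈ Ω ∩ sphere 0 R | 0 < σ * y i ∧ ∀ j, |y j| ≤ σ * y i} ≤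
      ENNReal.ofReal ((2 * (n + 1)) ^ n * (4 * (n + 1)) ^ (n + 1) / R) *
        volume {v : Fin (n + 1) → ℝ | WithLp.toLp 2 v ∈ Ω ∩ ball 0 (R / 2)} := by
  have hσσ : σ * σ = 1 := by rcases hσ with rfl | rfl <;> norm_num
  have hσa : |σ| = 1 := by rcases hσ with rfl | rfl <;> norm_num
  set ins : (Fin n → ℝ) → EuclideanSpace ℝ (Fin (n + 1)) :=
    fun w => WithLp.toLp 2 (i.insertNth σ w) with hins
  set D : Set (Fin n → ℝ) := {w | (∀ j, |w j| ≤ 1) ∧ ∃ s : ℝ, 0 < s ∧ s • ins w ∈ Ω ∩ sphere 0 R}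
    with hD
  set h : ℝ := R / (2 * (n + 1)) with hh
  have hhpos : 0 < h := by positivity
  have hU : IsOpen {v : Fin (n + 1) → ℝ | WithLp.toLp 2 v ∈ Ω ∩ ball 0 (R / 2)} :=
    (hΩ.inter isOpen_ball).preimage (PiLp.continuous_toLp 2 _)
  have hvol := volume_cone_section_le (D := D) hU i hσ hhpos (by
    rintro w ⟨hw, s, hs, hsΩ, hsR⟩ t ⟨ht1, ht2⟩
    have ht : 0 < t := by linarith
    change t • ins w ∈ Ω ∩ ball 0 (R / 2)
    have hn1 : ‖ins w‖ ≤ (n + 1) * 1 := by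
      refine EuclideanSpace.norm_le_of_forall_abs_le zero_le_one ?_
      exact i.forall_iff_succAbove.2 ⟨by simp [hins, hσa], fun j => by simpa [hins] using hw j⟩
    have hn2 : ‖t • ins w‖ < R / 2 := by
      rw [norm_smul, Real.norm_of_nonneg ht.le]
      calc t * ‖ins w‖ ≤ t * (n + 1) := by gcongr; linarith
        _ < h * (n + 1) := by gcongr
        _ = R / 2 := by rw [hh]; field_simp
    refine ⟨?_, mem_ball_zero_iff.2 hn2⟩
    rw [mem_sphere_zero_iff_norm, norm_smul, Real.norm_of_nonneg hs.le] at hsR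
    rw [norm_smul, Real.norm_of_nonneg ht.le] at hn2
    have hts : t < s := by
      by_contra! hle
      have := mul_le_mul_of_nonneg_right hle (norm_nonneg (ins w))
      linarith
    have hmem := hc.combo_interior_closure_mem_interior (x := s • ins w) (y := 0)
      (by rwa [hΩ.interior_eq]) h0 (a := t / s) (b := 1 - t / s) (by positivity)
      (by rw [sub_nonneg, div_le_one hs]; exact hts.le) (by ring)
    rw [hΩ.interior_eq, smul_zero, add_zero, smul_smul, div_mul_cancel₀ _ hs.ne'] at hmem
    exact hmem)
  have hsub : {y ∈ Ω ∩ sphere 0 R | 0 < σ * y i ∧ ∀ j, |y j| ≤ σ * y i} ⊆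
      (fun w => R • ‖ins w‖⁻¹ • ins w) '' D := by
    rintro y ⟨hy, hpos, hmax⟩
    set s := σ * y i with hs
    set w : Fin n → ℝ := fun j => y (i.succAbove j) / s with hw
    have hsw : s • ins w = y := by
      refine PiLp.ext (i.forall_iff_succAbove.2 ⟨?_, fun j => ?_⟩)
      · simp only [hins, PiLp.smul_apply, Fin.insertNth_apply_same, smul_eq_mul, hs]
        linear_combination (y i) * hσσ
      · simp only [hins, PiLp.smul_apply, Fin.insertNth_apply_succAbove, smul_eq_mul, hw]
        field_simp
    refine ⟨w, ⟨fun j => ?_, s, hpos, hsw ▸ hy⟩, ?_⟩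
    · rw [hw, abs_div, abs_of_pos hpos, div_le_one hpos]
      exact hmax _
    · have hyR : ‖y‖ = R := mem_sphere_zero_iff_norm.1 hy.2
      rw [← hsw, norm_smul, Real.norm_of_nonneg hpos.le] at hyR
      have hne : ‖ins w‖ ≠ 0 := fun h => by rw [h] at hyR; linarith
      change R • ‖ins w‖⁻¹ • ins w = y
      rw [smul_smul, ← hyR, mul_assoc, mul_inv_cancel₀ hne, mul_one, hsw]
  have hpi := hausdorffMeasure_pi_real (ι := Fin n)
  rw [Fintype.card_fin] at hpi
  calc _ ≤ μH[(n : ℝ)] ((fun w => R • ‖ins w‖⁻¹ • ins w) '' D) := measure_mono hsub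
    _ ≤ ENNReal.ofReal (2 * R * (n + 1)) ^ (n : ℝ) * μH[(n : ℝ)] D :=
      (lipschitzWith_sphere_chart i hσa hR).hausdorffMeasure_image_le (Nat.cast_nonneg n) D
    _ ≤ ENNReal.ofReal (2 * R * (n + 1)) ^ n * (ENNReal.ofReal ((2 / h) ^ (n + 1)) *
        volume {v : Fin (n + 1) → ℝ | WithLp.toLp 2 v ∈ Ω ∩ ball 0 (R / 2)}) := by
      rw [hpi, ENNReal.rpow_natCast]
      gcongr
    _ = _ := by
      rw [← mul_assoc, ← ENNReal.ofReal_pow (by positivity), ← ENNReal.ofReal_mul (by positivity)]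
      congr 2
      have : 2 / h = 4 * (n + 1) / R := by rw [hh]; field_simp; norm_num
      rw [this, div_pow, pow_succ R, mul_right_comm 2 R, mul_pow _ R]
      field_simp

theorem hausdorffMeasure_inter_sphere_le_volume {n : ℕ}
    {Ω : Set (EuclideanSpace ℝ (Fin (n + 1)))}
    (hΩ : IsOpen Ω) (hc : Convex ℝ Ω) (h0 : 0 ∈ closure Ω) {R : ℝ} (hR : 0 < R) :
    μH[(n : ℝ)] (Ω ∩ sphere 0 R) ≤
      ENNReal.ofReal (2 * (n + 1) * ((2 * (n + 1)) ^ n * (4 * (n + 1)) ^ (n + 1)) / R) *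
        volume {v : Fin (n + 1) → ℝ | WithLp.toLp 2 v ∈ Ω ∩ ball 0 (R / 2)} := by
  set P : Fin (n + 1) → ℝ → Set (EuclideanSpace ℝ (Fin (n + 1))) := fun i σ =>
    {y ∈ Ω ∩ sphere 0 R | 0 < σ * y i ∧ ∀ j, |y j| ≤ σ * y i} with hP
  have hsub : Ω ∩ sphere 0 R ⊆ ⋃ i, P i 1 ∪ P i (-1) := fun y hy => by
    obtain ⟨i, hi⟩ := Finite.exists_max (fun j => |y j|)
    have hne : y i ≠ 0 := fun h => by
      have : y = 0 := PiLp.ext fun j => by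
        have := hi j
        rw [h, abs_zero] at this
        simpa using this
      have h2 := mem_sphere_zero_iff_norm.1 hy.2
      rw [this, norm_zero] at h2
      exact hR.ne h2
    refine mem_iUnion.2 ⟨i, ?_⟩
    rcases hne.lt_or_gt with hneg | hpos
    · right
      rw [abs_of_neg hneg] at hi
      exact ⟨hy, by linarith, fun j => (hi j).trans (by linarith)⟩
    · left
      rw [abs_of_pos hpos] at hi
      exact ⟨hy, by linarith, fun j => (hi j).trans (by linarith)⟩
  set X := ENNReal.ofReal ((2 * (n + 1)) ^ n * (4 * (n + 1)) ^ (n + 1) / R) *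
        volume {v : Fin (n + 1) → ℝ | WithLp.toLp 2 v ∈ Ω ∩ ball 0 (R / 2)} with hX
  calc _ ≤ ∑ i, μH[(n : ℝ)] (P i 1 ∪ P i (-1)) :=
        (measure_mono hsub).trans (measure_iUnion_fintype_le _ _)
    _ ≤ ∑ _i : Fin (n + 1), (X + X) := Finset.sum_le_sum fun i _ => (measure_union_le _ _).trans
        (add_le_add (hausdorffMeasure_sphere_patch_le hΩ hc h0 hR i (Or.inl rfl))
          (hausdorffMeasure_sphere_patch_le hΩ hc h0 hR i (Or.inr rfl)))
    _ = ENNReal.ofReal (2 * (n + 1)) * X := by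
        rw [ENNReal.ofReal_mul (by norm_num), ENNReal.ofReal_add (by positivity) (by norm_num)]
        simp
        ring
    _ = _ := by
        rw [hX, ← mul_assoc, ← ENNReal.ofReal_mul (by positivity), ← mul_div_assoc]

theorem hausdorffMeasure_sphere_le_frontier_zero {n : ℕ} (hn : 1 ≤ n)
    {Ω : Set (EuclideanSpace ℝ (Fin (n + 1)))} (hΩ : IsOpen Ω) (hc : Convex ℝ Ω)
    (h0 : 0 ∈ frontier Ω) {R : ℝ} (hR : 0 < R) :
    μH[(n : ℝ)] (Ω ∩ sphere 0 R) ≤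
      ENNReal.ofReal (2 * (n + 1) * ((2 * (n + 1)) ^ n * (4 * (n + 1)) ^ (n + 1)) *
        ((n + 1) * (1 + 8 ^ n)) ^ (((n : ℝ) + 1) / n) / R) *
        (μH[(n : ℝ)] (frontier Ω ∩ ball 0 R)) ^ (((n : ℝ) + 1) / n) := by
  have hR2 : R / 2 < R := by linarith
  rw [hΩ.frontier_eq] at h0
  set A := μH[(n : ℝ)] (frontier Ω ∩ ball 0 R) with hA
  have h1 : μH[(n : ℝ)] (Ω ∩ sphere 0 (R / 2)) ≤ 8 ^ n * A := by
    have := hausdorffMeasure_inter_sphere_le hΩ hc h0.2 (half_pos hR) (Nat.cast_nonneg n)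
    rw [ENNReal.rpow_natCast] at this
    refine this.trans ?_
    gcongr
    exact measure_mono (inter_subset_inter_right _ (ball_subset_ball hR2.le))
  have h2 := volume_le_hausdorffMeasure_frontier hn hΩ (half_pos hR) hR2
  have h3 : ((n : ℝ≥0∞) + 1) * (A + μH[(n : ℝ)] (Ω ∩ sphere 0 (R / 2))) ≤
      ENNReal.ofReal ((n + 1) * (1 + 8 ^ n)) * A := by
    rw [ENNReal.ofReal_mul (by positivity), ENNReal.ofReal_add (by positivity) (by norm_num),
      ENNReal.ofReal_add (by norm_num) (by positivity), ENNReal.ofReal_pow (by norm_num)]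
    simp only [ENNReal.ofReal_natCast, ENNReal.ofReal_one, ENNReal.ofReal_ofNat]
    rw [mul_assoc, one_add_mul]
    gcongr
  refine (hausdorffMeasure_inter_sphere_le_volume hΩ hc h0.1 hR).trans ?_
  calc _ ≤ ENNReal.ofReal (2 * (n + 1) * ((2 * (n + 1)) ^ n * (4 * (n + 1)) ^ (n + 1)) / R) *
        (ENNReal.ofReal ((n + 1) * (1 + 8 ^ n)) * A) ^ (((n : ℝ) + 1) / n) := by
        gcongr
        exact h2.trans (ENNReal.rpow_le_rpow h3 (by positivity))
    _ = _ := by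
        rw [ENNReal.mul_rpow_of_nonneg _ _ (by positivity),
          ENNReal.ofReal_rpow_of_nonneg (by positivity) (by positivity), ← mul_assoc,
          ← ENNReal.ofReal_mul (by positivity), div_mul_eq_mul_div]

/-- Reverse perimeter-energy estimate for convex sets:
`|Ω ∩ ∂B_R(x)| ≤ (C_n / R) |∂Ω ∩ B_R(x)|^{(n+1)/n}`. -/
theorem convex_sphere_cap_estimate (n : ℕ) (hn : 1 ≤ n) :
    ∃ C : ℝ, 1 ≤ C ∧
      ∀ (Ω : Set (EuclideanSpace ℝ (Fin (n+1)))), IsOpen Ω → Convex ℝ Ω →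
      ∀ x ∈ frontier Ω, ∀ R : ℝ, 0 < R →
        μH[(n:ℝ)] (Ω ∩ sphere x R)
          ≤ ENNReal.ofReal (C / R) *
              (μH[(n:ℝ)] (frontier Ω ∩ ball x R)) ^ (((n:ℝ) + 1) / (n:ℝ)) := by
  refine ⟨max 1 (2 * (n + 1) * ((2 * (n + 1)) ^ n * (4 * (n + 1)) ^ (n + 1)) *
        ((n + 1) * (1 + 8 ^ n)) ^ (((n : ℝ) + 1) / n)), le_max_left _ _,
    fun Ω hΩ hc x hx R hR => ?_⟩
  set φ := IsometryEquiv.addRight x with hφ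
  have hfr : φ ⁻¹' frontier Ω = frontier (φ ⁻¹' Ω) := φ.toHomeomorph.preimage_frontier Ω
  have hsph : φ ⁻¹' sphere x R = sphere 0 R := by
    ext y; simp [hφ]
  have hball : φ ⁻¹' ball x R = ball 0 R := by
    ext y; simp [hφ]
  have key := hausdorffMeasure_sphere_le_frontier_zero hn (Ω := φ ⁻¹' Ω)
    (hΩ.preimage φ.continuous) (hc.translate_preimage_left x)
    (by rw [← hfr]; simpa [hφ] using hx) hR
  rw [← hfr, ← hsph, ← hball, ← preimage_inter, ← preimage_inter, φ.hausdorffMeasure_preimage,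
    φ.hausdorffMeasure_preimage] at key
  refine key.trans ?_
  gcongr
  exact le_max_right _ _
end
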